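/- Under the stated assumptions, the expected value of Y_N satisfies E(Y_N) = μ log N + o(√(log N)) as N → ∞; in particular E(Y_N) ∼ μ log N. -/

import Mathlib

open scoped BigOperators ENNReal
open Filter Asymptotics

noncomputable section

/-- `af P m n` is the number of ordered `m`-tuples `(n₁,…,n_m)` of elements of `P`
with product `n` (so `af P 0 n = 1` iff `n = 1`). -/
def af (P : Set ℕ) (m n : ℕ) : ℕ :=
  Nat.card {t : Fin m → ℕ // (∀ i, t i ∈ P) ∧ ∏ i, t i = n}

/-- `aTot P n = a(n) = Σ_{m ≥ 0} a_m(n)`. -/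
def aTot (P : Set ℕ) (n : ℕ) : ℝ := ∑' m : ℕ, (af P m n : ℝ)

/-- `Acum P N = A(N) = Σ_{1 ≤ n ≤ N} a(n)`. -/
def Acum (P : Set ℕ) (N : ℕ) : ℝ := ∑ n ∈ Finset.Icc 1 N, aTot P n

/-- The Dirichlet series `𝒫(x) = Σ_{n ∈ 𝒫} n^{-x}` at a real point. -/
def Pval (P : Set ℕ) (x : ℝ) : ℝ := ∑' n : P, ((n : ℕ) : ℝ) ^ (-x)

/-- `𝒫'(x) = -Σ_{n ∈ 𝒫} n^{-x} log n`. -/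
def Pderiv1 (P : Set ℕ) (x : ℝ) : ℝ := -∑' n : P, ((n : ℕ) : ℝ) ^ (-x) * Real.log (n : ℕ)

/-- `𝒫''(x) = Σ_{n ∈ 𝒫} n^{-x} (log n)^2`. -/
def Pderiv2 (P : Set ℕ) (x : ℝ) : ℝ := ∑' n : P, ((n : ℕ) : ℝ) ^ (-x) * (Real.log (n : ℕ)) ^ 2

/-- The abscissa of convergence `κ` of the Dirichlet series of `P`, as an extended real
(`⊥` when `P` is finite). -/
def kappa (P : Set ℕ) : EReal :=
  sInf {x : EReal | ∃ r : ℝ, x = (r : EReal) ∧ Summable (fun n : P => ((n : ℕ) : ℝ) ^ (-r))}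

open Classical in
/-- The (possibly infinite) value `𝒫(x) ∈ (0,∞]` of the Dirichlet series at an
extended-real point; at `x = -∞` every term `n^{-x}` is infinite. -/
def PvalE (P : Set ℕ) (x : EReal) : ℝ≥0∞ :=
  if x = ⊥ then ⊤ else ∑' n : P, ENNReal.ofReal (((n : ℕ) : ℝ) ^ (-x.toReal))


structure Walk (ι : Type) where
  w : ι → ℝ
  l : ι → ℝ
  b : ℝ
  η : ℝ
  wpos : ∀ p, 0 < w p
  wsum : HasSum w 1
  bpos : 0 < b
  hb : ∀ p, b ≤ l p
  ηpos : 0 < η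
  hexp : Summable fun p => w p * Real.exp (η * l p)

def LB (f : ℝ → ℝ) : Prop := ∀ y, ∃ C, ∀ z ≤ y, |f z| ≤ C

lemma LB.add {f g : ℝ → ℝ} (hf : LB f) (hg : LB g) : LB (fun y => f y + g y) := by
  intro y
  obtain ⟨C, hC⟩ := hf y
  obtain ⟨D, hD⟩ := hg y
  exact ⟨C + D, fun z hz => (abs_add_le _ _).trans (add_le_add (hC z hz) (hD z hz))⟩

lemma LB.mul {f g : ℝ → ℝ} (hf : LB f) (hg : LB g) : LB (fun y => f y * g y) := by
  intro y
  obtain ⟨C, hC⟩ := hf y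
  obtain ⟨D, hD⟩ := hg y
  refine ⟨C * D, fun z hz => ?_⟩
  rw [abs_mul]
  exact mul_le_mul (hC z hz) (hD z hz) (abs_nonneg _) ((abs_nonneg _).trans (hC z hz))

lemma LB.const (c : ℝ) : LB (fun _ => c) := fun _ => ⟨|c|, fun _ _ => le_rfl⟩

lemma LB.of_bdd {f : ℝ → ℝ} {C : ℝ} (h : ∀ y, |f y| ≤ C) : LB f := fun _ => ⟨C, fun z _ => h z⟩

lemma LB.cmul {f : ℝ → ℝ} (c : ℝ) (hf : LB f) : LB (fun y => c * f y) := (LB.const c).mul hf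

lemma LB.neg {f : ℝ → ℝ} (hf : LB f) : LB (fun y => - f y) := by
  intro y
  obtain ⟨C, hC⟩ := hf y
  exact ⟨C, fun z hz => by rw [abs_neg]; exact hC z hz⟩

lemma LB.sub {f g : ℝ → ℝ} (hf : LB f) (hg : LB g) : LB (fun y => f y - g y) := by
  simpa [sub_eq_add_neg] using hf.add hg.neg

lemma LB.shift {f : ℝ → ℝ} (hf : LB f) (s : ℝ) : LB (fun y => f (y - s)) := by
  intro y
  obtain ⟨C, hC⟩ := hf (y - s)
  exact ⟨C, fun z hz => hC _ (by linarith)⟩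

namespace Walk
variable {ι : Type} (X : Walk ι)

lemma lpos (p : ι) : 0 < X.l p := X.bpos.trans_le (X.hb p)

def F (f : ℝ → ℝ) (y : ℝ) : ℝ := ∑' p, X.w p * f (y - X.l p)

lemma summ_bdd {g : ι → ℝ} {C : ℝ} (h : ∀ p, |g p| ≤ C) : Summable fun p => X.w p * g p := by
  refine Summable.of_norm_bounded (X.wsum.summable.mul_right C) (fun p => ?_)
  rw [Real.norm_eq_abs, abs_mul, abs_of_pos (X.wpos p)]
  exact mul_le_mul_of_nonneg_left (h p) (X.wpos p).le

lemma summ {f : ℝ → ℝ} (hf : LB f) (y : ℝ) : Summable fun p => X.w p * f (y - X.l p) := by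
  obtain ⟨C, hC⟩ := hf y
  exact X.summ_bdd (C := C) fun p => hC _ (by linarith [X.lpos p])

lemma F_add {f g : ℝ → ℝ} (hf : LB f) (hg : LB g) (y : ℝ) :
    X.F (fun y => f y + g y) y = X.F f y + X.F g y := by
  unfold F
  rw [← (X.summ hf y).tsum_add (X.summ hg y)]
  exact tsum_congr fun p => by ring

lemma F_sub {f g : ℝ → ℝ} (hf : LB f) (hg : LB g) (y : ℝ) :
    X.F (fun y => f y - g y) y = X.F f y - X.F g y := by
  unfold F
  rw [← (X.summ hf y).tsum_sub (X.summ hg y)]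
  exact tsum_congr fun p => by ring

lemma F_cmul (c : ℝ) (f : ℝ → ℝ) (y : ℝ) :
    X.F (fun y => c * f y) y = c * X.F f y := by
  unfold F
  rw [← tsum_mul_left]
  exact tsum_congr fun p => by ring

lemma F_neg (f : ℝ → ℝ) (y : ℝ) :
    X.F (fun y => - f y) y = - X.F f y := by
  have := X.F_cmul (-1) f y
  simpa using this

lemma F_shift (f : ℝ → ℝ) (s y : ℝ) : X.F (fun z => f (z - s)) y = X.F f (y - s) := by
  unfold F
  exact tsum_congr fun p => by rw [sub_right_comm]

lemma comp (T : Set ℝ) (hT : ∀ y ∈ T, ∀ p, y - X.l p ∈ T) (f : ℝ → ℝ)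
    (hneg : ∀ y ∈ T, y < 0 → f y ≤ 0) (hpos : ∀ y ∈ T, 0 ≤ y → f y ≤ X.F f y) :
    ∀ y ∈ T, f y ≤ 0 := by
  have key : ∀ n : ℕ, ∀ y ∈ T, y < n * X.b → f y ≤ 0 := by
    intro n
    induction n with
    | zero => intro y hy h; exact hneg y hy (by simpa using h)
    | succ n ih =>
      intro y hy h
      rcases lt_or_ge y 0 with h0 | h0
      · exact hneg y hy h0
      · refine (hpos y hy h0).trans (tsum_nonpos fun p => ?_)
        refine mul_nonpos_of_nonneg_of_nonpos (X.wpos p).le (ih _ (hT y hy p) ?_)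
        push_cast at h
        linarith [X.hb p]
  intro y hy
  obtain ⟨n, hn⟩ := exists_nat_gt (y / X.b)
  exact key n y hy (by rwa [div_lt_iff₀ X.bpos] at hn)

lemma F_const (c : ℝ) (y : ℝ) : X.F (fun _ => c) y = c := by
  unfold F
  rw [tsum_mul_right, X.wsum.tsum_eq, one_mul]

lemma F_mono {f g : ℝ → ℝ} (hf : LB f) (hg : LB g) (y : ℝ)
    (h : ∀ p, f (y - X.l p) ≤ g (y - X.l p)) : X.F f y ≤ X.F g y :=
  (X.summ hf y).tsum_le_tsum (fun p => mul_le_mul_of_nonneg_left (h p) (X.wpos p).le) (X.summ hg y)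

/-- bounded supersolution -/
def G (θ : ℝ) (y : ℝ) : ℝ := 2 - Real.exp (-θ * max (y + X.b) 0)

lemma G_ge {θ : ℝ} (hθ : 0 < θ) (y : ℝ) : 1 ≤ X.G θ y := by
  unfold G
  have : Real.exp (-θ * max (y + X.b) 0) ≤ 1 := by
    rw [Real.exp_le_one_iff]
    nlinarith [le_max_right (y + X.b) 0]
  linarith

lemma G_le (θ : ℝ) (y : ℝ) : X.G θ y ≤ 2 := by
  unfold G
  linarith [Real.exp_pos (-θ * max (y + X.b) 0)]

lemma G_LB {θ : ℝ} (hθ : 0 < θ) : LB (X.G θ) :=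
  LB.of_bdd (C := 2) fun y => by
    rw [abs_le]; constructor <;> linarith [X.G_ge hθ y, X.G_le θ y]

lemma G_mono {θ : ℝ} (hθ : 0 < θ) : Monotone (X.G θ) := by
  intro x y h
  unfold G
  have : max (x + X.b) 0 ≤ max (y + X.b) 0 := max_le_max (by linarith) le_rfl
  have : Real.exp (-θ * max (y + X.b) 0) ≤ Real.exp (-θ * max (x + X.b) 0) :=
    Real.exp_le_exp.2 (by nlinarith)
  linarith

lemma G_super {θ : ℝ} (hθ : 0 < θ) (y : ℝ) : X.F (X.G θ) y ≤ X.G θ y := by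
  calc X.F (X.G θ) y ≤ X.F (fun _ => X.G θ y) y :=
        X.F_mono (X.G_LB hθ) (LB.const _) y fun p => X.G_mono hθ (by linarith [X.lpos p])
    _ = _ := X.F_const _ _

lemma G_super' {θ : ℝ} (hθ : 0 < θ) {y : ℝ} (hy : 0 ≤ y) :
    X.F (X.G θ) y + Real.exp (-θ * y) * (1 - Real.exp (-θ * X.b)) ≤ X.G θ y := by
  have h1 : X.F (X.G θ) y ≤ X.F (fun _ => X.G θ (y - X.b)) y :=
    X.F_mono (X.G_LB hθ) (LB.const _) y fun p => X.G_mono hθ (by linarith [X.hb p])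
  rw [X.F_const] at h1
  have h2 : X.G θ (y - X.b) = 2 - Real.exp (-θ * y) := by
    unfold G
    rw [sub_add_cancel, max_eq_left hy]
  have h3 : X.G θ y = 2 - Real.exp (-θ * y) * Real.exp (-θ * X.b) := by
    unfold G
    rw [max_eq_left (by linarith [X.bpos]), ← Real.exp_add]
    congr 2; ring
  rw [h2] at h1; rw [h3]; linarith

lemma gap_pos {θ : ℝ} (hθ : 0 < θ) : 0 < 1 - Real.exp (-θ * X.b) := by
  have : Real.exp (-θ * X.b) < 1 := by
    rw [Real.exp_lt_one_iff]
    nlinarith [X.bpos]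
  linarith

def Lin (y : ℝ) : ℝ := max (y + X.b) 0

lemma Lin_nonneg (y : ℝ) : 0 ≤ X.Lin y := le_max_right _ _

lemma Lin_LB : LB X.Lin := by
  intro y
  refine ⟨X.Lin y, fun z hz => ?_⟩
  rw [abs_of_nonneg (X.Lin_nonneg z)]
  exact max_le_max (by linarith) le_rfl

lemma Lin_super {y : ℝ} (hy : 0 ≤ y) : X.F X.Lin y + X.b ≤ X.Lin y := by
  have h1 : X.F X.Lin y ≤ X.F (fun _ => y) y :=
    X.F_mono X.Lin_LB (LB.const _) y fun p => by
      unfold Lin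
      exact max_le (by linarith [X.hb p]) hy
  rw [X.F_const] at h1
  have : X.Lin y = y + X.b := max_eq_left (by linarith [X.bpos])
  linarith

end Walk

structure Ren (ι : Type) extends Walk ι where
  ρ : ℝ
  ρpos : 0 < ρ
  h : ℝ → ℝ
  hneg : ∀ y < 0, h y = 0
  hren : ∀ y, 0 ≤ y → h y = Real.exp (-ρ * y) + ∑' p, w p * h (y - l p)
  hmono : Monotone fun y => Real.exp (ρ * y) * h y

namespace Ren
variable {ι : Type} (X : Ren ι)

lemma h_nonneg (y : ℝ) : 0 ≤ X.h y := by
  rcases lt_or_ge y 0 with h0 | h0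
  · rw [X.hneg y h0]
  · have := X.hmono (show (-1 : ℝ) ≤ y by linarith)
    simp only [X.hneg (-1) (by norm_num), mul_zero] at this
    exact nonneg_of_mul_nonneg_right this (Real.exp_pos _)

lemma h_reg {x y : ℝ} (hxy : x ≤ y) : X.h x ≤ Real.exp (X.ρ * (y - x)) * X.h y := by
  have := X.hmono hxy
  dsimp only at this
  rw [mul_sub, Real.exp_sub, div_mul_eq_mul_div, le_div_iff₀ (Real.exp_pos _)]
  linarith

lemma h_LB : LB X.h := by
  intro y
  refine ⟨Real.exp (X.ρ * |y|) * X.h y, fun z hz => ?_⟩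
  rw [abs_of_nonneg (X.h_nonneg z)]
  rcases lt_or_ge z 0 with h0 | h0
  · rw [X.hneg z h0]
    exact mul_nonneg (Real.exp_pos _).le (X.h_nonneg y)
  · refine (X.h_reg hz).trans (mul_le_mul_of_nonneg_right (Real.exp_le_exp.2 ?_) (X.h_nonneg y))
    refine mul_le_mul_of_nonneg_left ?_ X.ρpos.le
    linarith [le_abs_self y]

lemma ren (y : ℝ) (hy : 0 ≤ y) : X.h y = Real.exp (-X.ρ * y) + X.F X.h y := X.hren y hy

lemma exists_bdd : ∃ C, 0 < C ∧ ∀ y, X.h y ≤ C := by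
  have hg := X.gap_pos X.ρpos
  set c := 1 - Real.exp (-X.ρ * X.b) with hc
  refine ⟨1 / c * 2, by positivity, fun y => ?_⟩
  have := X.comp Set.univ (fun _ _ _ => trivial) (fun y => X.h y - 1 / c * X.G X.ρ y)
    (fun y _ hy => by
      simp only [X.hneg y hy]
      have := X.G_ge X.ρpos y
      have : 0 ≤ 1 / c * X.G X.ρ y := by positivity
      linarith)
    (fun y _ hy => by
      rw [X.F_sub X.h_LB ((X.G_LB X.ρpos).cmul _), X.F_cmul]
      have h1 := X.G_super' X.ρpos hy
      rw [← hc] at h1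
      have h2 := X.ren y hy
      have h3 : 1 / c * (X.F (X.G X.ρ) y + Real.exp (-X.ρ * y) * c) ≤ 1 / c * X.G X.ρ y :=
        mul_le_mul_of_nonneg_left h1 (by positivity)
      have h4 : 1 / c * (X.F (X.G X.ρ) y + Real.exp (-X.ρ * y) * c)
        = 1 / c * (X.F (X.G X.ρ) y) + Real.exp (-X.ρ * y) := by field_simp
      linarith) y trivial
  have h2 : 1 / c * X.G X.ρ y ≤ 1 / c * 2 := mul_le_mul_of_nonneg_left (X.G_le _ _) (by positivity)
  linarith

end Ren

open Topology in
lemma Walk.harm_le {ι : Type} (X : Walk ι) (D r : ℝ → ℝ) (C C' : ℝ) (hD : ∀ y, |D y| ≤ C)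
    (hr : Tendsto r atTop (𝓝 0)) (heq : ∀ᶠ y in atTop, D y = r y + X.F D y) (p : ι)
    (hsum : ∀ n : ℕ, ∀ y, ∑ j ∈ Finset.range n, D (y - j * X.l p) ≤ C') :
    ∀ ε > 0, ∀ᶠ y in atTop, D y ≤ ε := by
  intro ε hε
  by_contra hcon
  have hfreq : ∃ᶠ y in atTop, D y ∈ Set.Icc ε C := by
    have : ∃ᶠ y in atTop, ¬ D y ≤ ε := not_eventually.1 hcon
    exact this.mono fun y hy => ⟨(not_le.1 hy).le, (abs_le.1 (hD y)).2⟩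
  obtain ⟨θ0, hθ0, hcl0⟩ := isCompact_Icc.exists_mapClusterPt_of_frequently hfreq
  have hclosed : IsClosed {θ : ℝ | MapClusterPt θ atTop D} := isClosed_setOfPred_clusterPt
  have hcomp : IsCompact (Set.Icc ε C ∩ {θ : ℝ | MapClusterPt θ atTop D}) :=
    isCompact_Icc.inter_right hclosed
  obtain ⟨θ, ⟨hθ, hcl⟩, hmax⟩ := hcomp.exists_isGreatest ⟨θ0, hθ0, hcl0⟩
  have htop : ∀ s : ℝ, Tendsto (fun y : ℝ => y - s) atTop atTop := fun s =>
    tendsto_atTop_add_const_right _ (-s) tendsto_id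
  have step : ∀ ω : Ultrafilter ℝ, (ω : Filter ℝ) ≤ atTop → Tendsto D ω (𝓝 θ) →
      Tendsto (fun y => D (y - X.l p)) ω (𝓝 θ) := by
    intro ω hω hlim
    have hex : ∀ q, ∃ d ∈ Set.Icc (-C) C, Tendsto (fun y => D (y - X.l q)) ω (𝓝 d) := by
      intro q
      have : ((ω.map (fun y => D (y - X.l q)) : Ultrafilter ℝ) : Filter ℝ) ≤ 𝓟 (Set.Icc (-C) C) := by
        rw [le_principal_iff]
        exact Filter.mem_map.2 (Filter.univ_mem' fun y => abs_le.1 (hD _))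
      obtain ⟨d, hd, hd'⟩ := isCompact_iff_ultrafilter_le_nhds.1 (isCompact_Icc (a := -C) (b := C)) _ this
      exact ⟨d, hd, hd'⟩
    choose d hdC hd using hex
    have hle : ∀ q, d q ≤ θ := by
      intro q
      by_contra hlt
      push Not at hlt
      have hc : MapClusterPt (d q) atTop D := by
        have h1 : MapClusterPt (d q) atTop (D ∘ fun y => y - X.l q) :=
          mapClusterPt_iff_ultrafilter.2 ⟨ω, hω, hd q⟩
        exact h1.of_comp (htop _)
      exact absurd (hmax ⟨⟨hθ.1.trans hlt.le, (hdC q).2⟩, hc⟩) (not_le.2 hlt)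
    have ht : Tendsto (fun y => X.F D y) ω (𝓝 (∑' q, X.w q * d q)) := by
      refine tendsto_tsum_of_dominated_convergence (bound := fun q => X.w q * C)
        (X.wsum.summable.mul_right C) (fun q => (hd q).const_mul _) ?_
      refine Filter.Eventually.of_forall fun y q => ?_
      rw [Real.norm_eq_abs, abs_mul, abs_of_pos (X.wpos q)]
      exact mul_le_mul_of_nonneg_left (hD _) (X.wpos q).le
    have ht2 : Tendsto D ω (𝓝 (0 + ∑' q, X.w q * d q)) := by
      refine ((hr.mono_left hω).add ht).congr' ?_
      filter_upwards [hω heq] with y hy using hy.symm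
    have heqθ : θ = ∑' q, X.w q * d q := by
      have := tendsto_nhds_unique hlim ht2
      rwa [zero_add] at this
    have hsd : Summable fun q => X.w q * d q := X.summ_bdd (C := C) fun q => abs_le.2 (hdC q)
    have hs0 : HasSum (fun q => X.w q * (θ - d q)) 0 := by
      have := (X.wsum.mul_right θ).sub hsd.hasSum
      rw [← heqθ, one_mul, sub_self] at this
      refine this.congr_fun ?_
      intro q; ring
    have hz := (hasSum_zero_iff_of_nonneg (fun q => mul_nonneg (X.wpos q).le
      (sub_nonneg.2 (hle q)))).1 hs0
    have : X.w p * (θ - d p) = 0 := congrFun hz p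
    have : d p = θ := by
      rcases mul_eq_zero.1 this with h | h
      · exact absurd h (X.wpos p).ne'
      · linarith
    rw [← this]; exact hd p
  obtain ⟨ω, hω, hlim⟩ := mapClusterPt_iff_ultrafilter.1 hcl
  have iter : ∀ n : ℕ, Tendsto (fun y => D (y - n * X.l p)) ω (𝓝 θ) := by
    intro n
    induction n with
    | zero => simpa using hlim
    | succ n ih =>
      have := step (ω.map fun y => y - n * X.l p) ((htop _).mono_left hω) ih
      have h2 : Tendsto (fun y => D (y - n * X.l p - X.l p)) ω (𝓝 θ) := this
      refine h2.congr fun y => ?_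
      congr 1; push_cast; ring
  have hn : ∀ n : ℕ, n * θ ≤ C' := by
    intro n
    have h1 : Tendsto (fun y => ∑ j ∈ Finset.range n, D (y - j * X.l p)) ω
        (𝓝 (∑ j ∈ Finset.range n, θ)) := tendsto_finsetSum _ fun j _ => iter j
    have := le_of_tendsto' h1 (hsum n)
    simpa using this
  obtain ⟨n, hn'⟩ := exists_nat_gt (C' / θ)
  have hθpos : 0 < θ := hε.trans_le hθ.1
  rw [div_lt_iff₀ hθpos] at hn'
  linarith [hn n]

namespace Ren
variable {ι : Type} (X : Ren ι)

lemma sum_tele (f : ℝ → ℝ) (s y : ℝ) (n : ℕ) :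
    ∑ j ∈ Finset.range n, (f (y - j * s) - f (y - j * s - s)) = f y - f (y - n * s) := by
  induction n with
  | zero => simp
  | succ n ih =>
    rw [Finset.sum_range_succ, ih]
    have : y - n * s - s = y - (n + 1 : ℕ) * s := by push_cast; ring
    rw [this]; ring

open Topology in
lemma shift0 (p : ι) : Tendsto (fun y => X.h y - X.h (y - X.l p)) atTop (𝓝 0) := by
  obtain ⟨C, hC0, hC⟩ := X.exists_bdd
  have hb : ∀ y, |X.h y - X.h (y - X.l p)| ≤ C := fun y => by
    rw [abs_le]
    constructor <;> linarith [hC y, hC (y - X.l p), X.h_nonneg y, X.h_nonneg (y - X.l p)]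
  have hrexp : Tendsto (fun y : ℝ => Real.exp (-X.ρ * y)) atTop (𝓝 0) := by
    refine Real.tendsto_exp_atBot.comp ?_
    exact (tendsto_id.const_mul_atTop_of_neg (by linarith [X.ρpos]))
  have hr : Tendsto (fun y : ℝ => Real.exp (-X.ρ * y) - Real.exp (-X.ρ * (y - X.l p))) atTop (𝓝 0) := by
    have h2 : Tendsto (fun y : ℝ => Real.exp (-X.ρ * (y - X.l p))) atTop (𝓝 0) :=
      hrexp.comp (tendsto_atTop_add_const_right _ (-X.l p) tendsto_id)
    simpa using hrexp.sub h2
  have heq : ∀ᶠ y in atTop, X.h y - X.h (y - X.l p) =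
      (Real.exp (-X.ρ * y) - Real.exp (-X.ρ * (y - X.l p))) +
        X.F (fun y => X.h y - X.h (y - X.l p)) y := by
    filter_upwards [eventually_ge_atTop (X.l p)] with y hy
    rw [X.F_sub X.h_LB (X.h_LB.shift _), X.F_shift, X.ren y (by linarith [X.lpos p]),
      X.ren (y - X.l p) (by linarith)]
    ring
  have h1 := X.harm_le (fun y => X.h y - X.h (y - X.l p)) _ C C hb hr heq p (by
    intro n y
    rw [sum_tele X.h]
    linarith [hC y, X.h_nonneg (y - n * X.l p)])
  have h2 := X.harm_le (fun y => -(X.h y - X.h (y - X.l p))) (fun y =>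
      -(Real.exp (-X.ρ * y) - Real.exp (-X.ρ * (y - X.l p)))) C C
    (fun y => by rw [abs_neg]; exact hb y) (by simpa using hr.neg)
    (by
      filter_upwards [heq] with y hy
      rw [X.F_neg (fun y => X.h y - X.h (y - X.l p)), hy]
      ring) p (by
    intro n y
    rw [Finset.sum_neg_distrib, sum_tele X.h]
    linarith [hC (y - n * X.l p), X.h_nonneg y])
  rw [Metric.tendsto_nhds]
  intro ε hε
  filter_upwards [h1 (ε / 2) (by linarith), h2 (ε / 2) (by linarith)] with y a b
  rw [Real.dist_eq, sub_zero, abs_lt]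
  constructor <;> linarith

open Topology in
/-- asymptotic periods -/
def Per : AddSubgroup ℝ where
  carrier := {s | Tendsto (fun y => X.h y - X.h (y - s)) atTop (𝓝 0)}
  zero_mem' := by simp
  add_mem' := by
    intro a b ha hb
    have h1 : Tendsto (fun y => X.h (y - a) - X.h (y - a - b)) atTop (𝓝 0) :=
      Tendsto.comp (g := fun y => X.h y - X.h (y - b)) hb
        (tendsto_atTop_add_const_right _ (-a) tendsto_id)
    have := Tendsto.add ha h1
    simp only [add_zero] at this
    refine this.congr fun y => ?_
    rw [sub_sub]; ring
  neg_mem' := by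
    intro a ha
    have h1 : Tendsto (fun y => X.h (y + a) - X.h (y + a - a)) atTop (𝓝 0) :=
      Tendsto.comp (g := fun y => X.h y - X.h (y - a)) ha
        (tendsto_atTop_add_const_right _ a tendsto_id)
    have := h1.neg
    simp only [neg_zero] at this
    refine this.congr fun y => ?_
    rw [add_sub_cancel_right, sub_neg_eq_add]; ring

def H : AddSubgroup ℝ := AddSubgroup.closure (Set.range X.l)

lemma H_le_Per : X.H ≤ X.Per := by
  unfold H
  rw [AddSubgroup.closure_le]
  rintro _ ⟨p, rfl⟩
  exact X.shift0 p

lemma l_mem (p : ι) : X.l p ∈ X.H := AddSubgroup.subset_closure ⟨p, rfl⟩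

end Ren

lemma Walk.summ_exp_bdd {ι : Type} (X : Walk ι) {g : ι → ℝ} {C : ℝ}
    (h : ∀ p, |g p| ≤ C * Real.exp (X.η * X.l p)) : Summable fun p => X.w p * g p := by
  refine Summable.of_norm_bounded (X.hexp.mul_left C) (fun p => ?_)
  rw [Real.norm_eq_abs, abs_mul, abs_of_pos (X.wpos p)]
  calc X.w p * |g p| ≤ X.w p * (C * Real.exp (X.η * X.l p)) :=
        mul_le_mul_of_nonneg_left (h p) (X.wpos p).le
    _ = _ := by ring

lemma Walk.summ_l {ι : Type} (X : Walk ι) : Summable fun p => X.w p * X.l p := by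
  refine X.summ_exp_bdd (C := 1 / X.η) fun p => ?_
  rw [abs_of_pos (X.lpos p), div_mul_eq_mul_div, one_mul, le_div_iff₀ X.ηpos]
  have := Real.add_one_le_exp (X.η * X.l p)
  linarith

lemma Walk.count {ι : Type} (X : Walk ι) : Countable ι := by
  have := X.wsum.summable.countable_support
  have hu : Function.support X.w = Set.univ := by
    ext p; simp [(X.wpos p).ne']
  rw [hu] at this
  exact Set.countable_univ_iff.1 this

namespace Ren
variable {ι : Type} (X : Ren ι)

lemma h_int (a b : ℝ) : IntervalIntegrable X.h MeasureTheory.volume a b := by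
  have h1 : IntervalIntegrable (fun y => Real.exp (X.ρ * y) * X.h y) MeasureTheory.volume a b :=
    X.hmono.intervalIntegrable
  have h2 := h1.continuousOn_mul (g := fun y => Real.exp (-(X.ρ * y)))
    (by fun_prop)
  refine h2.congr ?_
  intro y _
  simp only
  rw [← mul_assoc, ← Real.exp_add]; simp

def psi (x s : ℝ) : ℝ := ∫ t in (x - s)..x, X.h t

lemma psi_add (x s r : ℝ) : X.psi x (s + r) = X.psi x s + X.psi (x - s) r := by
  unfold psi
  rw [add_comm (∫ t in (x - s)..x, X.h t), sub_sub, intervalIntegral.integral_add_adjacent_intervals (X.h_int _ _) (X.h_int _ _)]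

lemma psi_bdd : ∃ C, 0 < C ∧ ∀ x s, |X.psi x s| ≤ C * |s| := by
  obtain ⟨C, hC0, hC⟩ := X.exists_bdd
  refine ⟨C, hC0, fun x s => ?_⟩
  have := intervalIntegral.norm_integral_le_of_norm_le_const (a := x - s) (b := x) (f := X.h) (C := C)
    (fun t _ => by rw [Real.norm_eq_abs, abs_of_nonneg (X.h_nonneg t)]; exact hC t)
  simpa [psi] using this

open Topology in
lemma psi_shift {r : ℝ} (hr : r ∈ X.Per) (s : ℝ) :
    Tendsto (fun x => X.psi x s - X.psi (x - r) s) atTop (𝓝 0) := by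
  have hr' : Tendsto (fun y => X.h y - X.h (y - r)) atTop (𝓝 0) := hr
  rw [Metric.tendsto_nhds] at hr' ⊢
  intro ε hε
  have hd : 0 < ε / (|s| + 1) := by positivity
  obtain ⟨K, hK⟩ := eventually_atTop.1 (hr' _ hd)
  filter_upwards [eventually_ge_atTop (K + |s|)] with x hx
  have h1 : X.psi (x - r) s = ∫ t in (x - s)..x, X.h (t - r) := by
    rw [intervalIntegral.integral_comp_sub_right]
    unfold psi; congr 1; ring
  have hint : IntervalIntegrable (fun t => X.h (t - r)) MeasureTheory.volume (x - s) x := by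
    have := (X.h_int (x - s - r) (x - r)).comp_sub_right r
    simpa using this
  rw [h1, psi, ← intervalIntegral.integral_sub (X.h_int _ _) hint, dist_zero_right]
  have := intervalIntegral.norm_integral_le_of_norm_le_const (a := x - s) (b := x)
    (f := fun t => X.h t - X.h (t - r)) (C := ε / (|s| + 1)) (fun t ht => by
      have h2 : K ≤ t := by
        rcases Set.mem_uIoc.1 ht with h | h
        · have := le_abs_self s; linarith [h.1]
        · have := abs_nonneg s; linarith [h.1]
      have := hK t h2
      rw [dist_zero_right] at this
      exact this.le)
  refine this.trans_lt ?_
  rw [sub_sub_cancel, div_mul_eq_mul_div, div_lt_iff₀ (by positivity)]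
  nlinarith [abs_nonneg s]

lemma psi_eq_zero_aux (y : ℝ) (hy : y ≤ 0) : ∫ t in (0:ℝ)..y, X.h t = 0 := by
  rw [intervalIntegral.integral_symm, neg_eq_zero]
  have : ∀ᵐ t : ℝ, t ∈ Set.uIoc y 0 → X.h t = 0 := by
    have h0 : ∀ᵐ t : ℝ, t ≠ 0 := by
      simp [MeasureTheory.ae_iff]
    filter_upwards [h0] with t ht hm
    rw [Set.uIoc_of_le hy] at hm
    exact X.hneg t (lt_of_le_of_ne hm.2 ht)
  rw [intervalIntegral.integral_congr_ae this]
  simp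

lemma psi_identity {x : ℝ} (hx : 0 ≤ x) :
    ∑' p, X.w p * X.psi x (X.l p) = (1 - Real.exp (-X.ρ * x)) / X.ρ := by
  obtain ⟨C, hC0, hC⟩ := X.exists_bdd
  have hint : ∀ p a b, IntervalIntegrable (fun t => X.h (t - X.l p)) MeasureTheory.volume a b := by
    intro p a b
    have := (X.h_int (a - X.l p) (b - X.l p)).comp_sub_right (X.l p)
    simpa using this
  have := X.count
  have hs := intervalIntegral.hasSum_integral_of_dominated_convergence
    (μ := MeasureTheory.volume) (a := 0) (b := x)
    (F := fun p t => X.w p * X.h (t - X.l p)) (f := fun t => X.F X.h t)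
    (fun p _ => X.w p * C)
    (fun p => by
      have h := (hint p 0 x).const_mul (X.w p)
      rw [intervalIntegrable_iff] at h
      exact h.aestronglyMeasurable)
    (fun p => Filter.Eventually.of_forall fun t _ => by
      rw [Real.norm_eq_abs, abs_mul, abs_of_pos (X.wpos p), abs_of_nonneg (X.h_nonneg _)]
      exact mul_le_mul_of_nonneg_left (hC _) (X.wpos p).le)
    (Filter.Eventually.of_forall fun t _ => X.wsum.summable.mul_right C)
    (by simp)
    (Filter.Eventually.of_forall fun t _ => (X.summ X.h_LB t).hasSum)
  have hF : ∫ t in (0:ℝ)..x, X.F X.h t = (∫ t in (0:ℝ)..x, X.h t) - (1 - Real.exp (-X.ρ * x)) / X.ρ := by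
    have h1 : ∫ t in (0:ℝ)..x, X.F X.h t = ∫ t in (0:ℝ)..x, (X.h t - Real.exp (-X.ρ * t)) := by
      apply intervalIntegral.integral_congr
      intro t ht
      rw [Set.uIcc_of_le hx] at ht
      have := X.ren t ht.1
      simp only; linarith
    rw [h1, intervalIntegral.integral_sub (X.h_int _ _) (by
      apply Continuous.intervalIntegrable; fun_prop)]
    congr 1
    have hder : ∀ t ∈ Set.uIcc 0 x, HasDerivAt (fun t => -(Real.exp (-X.ρ * t) / X.ρ)) (Real.exp (-X.ρ * t)) t := by
      intro t _
      have h1 : HasDerivAt (fun t => Real.exp (-X.ρ * t)) (Real.exp (-X.ρ * t) * (-X.ρ * 1)) t :=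
        ((hasDerivAt_id t).const_mul (-X.ρ)).exp
      have h2 := (h1.div_const X.ρ).neg
      have h3 := X.ρpos.ne'
      have h4 : -(Real.exp (-X.ρ * t) * (-X.ρ * 1) / X.ρ) = Real.exp (-X.ρ * t) := by
        rw [mul_one, mul_neg, neg_div, neg_neg, mul_div_assoc, div_self h3, mul_one]
      rw [h4] at h2
      exact h2
    rw [intervalIntegral.integral_eq_sub_of_hasDerivAt hder (by
      apply Continuous.intervalIntegrable; fun_prop)]
    simp; ring
  rw [hF] at hs
  have h2 : ∀ p, ∫ t in (0:ℝ)..x, X.w p * X.h (t - X.l p) =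
      X.w p * ((∫ t in (0:ℝ)..x, X.h t) - X.psi x (X.l p)) := by
    intro p
    rw [intervalIntegral.integral_const_mul, intervalIntegral.integral_comp_sub_right]
    congr 1
    have e1 := intervalIntegral.integral_add_adjacent_intervals (X.h_int 0 (0 - X.l p)) (X.h_int (0 - X.l p) (x - X.l p))
    have e2 := intervalIntegral.integral_add_adjacent_intervals (X.h_int 0 (x - X.l p)) (X.h_int (x - X.l p) x)
    rw [X.psi_eq_zero_aux (0 - X.l p) (by linarith [X.lpos p])] at e1
    unfold psi
    linarith
  simp only [h2] at hs
  have h3 := (X.wsum.mul_right (∫ t in (0:ℝ)..x, X.h t)).sub hs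
  have h4 : HasSum (fun p => X.w p * X.psi x (X.l p)) ((1 - Real.exp (-X.ρ * x)) / X.ρ) := by
    rw [one_mul, sub_sub_cancel] at h3
    refine h3.congr_fun fun p => ?_
    ring
  exact h4.tsum_eq

def mean : ℝ := ∑' p, X.w p * X.l p

def lam : ℝ := 1 / (X.ρ * X.mean)

lemma nonempty {ι : Type} (X : Ren ι) : Nonempty ι := by
  by_contra h
  rw [not_nonempty_iff] at h
  have := X.wsum.tsum_eq
  simp at this

lemma mean_pos : 0 < X.mean := by
  obtain ⟨p⟩ := X.nonempty
  exact X.summ_l.tsum_pos (fun q => (mul_pos (X.wpos q) (X.lpos q)).le) p (mul_pos (X.wpos p) (X.lpos p))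

lemma lam_pos : 0 < X.lam := by
  have := X.mean_pos; have := X.ρpos
  unfold lam; positivity

open Topology in
lemma psi_lim {s : ℝ} (hs : s ∈ X.Per) : Tendsto (fun x => X.psi x s) atTop (𝓝 (X.lam * s)) := by
  obtain ⟨C, hC0, hC⟩ := X.psi_bdd
  rw [tendsto_iff_ultrafilter]
  intro ω hω
  have hex : ∀ s, ∃ d ∈ Set.Icc (-(C * |s|)) (C * |s|), Tendsto (fun x => X.psi x s) ω (𝓝 d) := by
    intro s
    have : ((ω.map (fun x => X.psi x s) : Ultrafilter ℝ) : Filter ℝ) ≤ 𝓟 (Set.Icc (-(C * |s|)) (C * |s|)) := by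
      rw [le_principal_iff]
      exact Filter.mem_map.2 (Filter.univ_mem' fun y => abs_le.1 (hC _ _))
    obtain ⟨d, hd, hd'⟩ := isCompact_iff_ultrafilter_le_nhds.1 (isCompact_Icc) _ this
    exact ⟨d, hd, hd'⟩
  choose Λ hΛC hΛ using hex
  have hadd : ∀ s ∈ X.Per, ∀ r, Λ (s + r) = Λ s + Λ r := by
    intro s hs r
    refine tendsto_nhds_unique (hΛ (s + r)) ?_
    have h1 := ((X.psi_shift hs r).mono_left hω)
    have h2 := ((hΛ s).add (hΛ r)).sub h1
    rw [sub_zero] at h2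
    refine h2.congr fun x => ?_
    rw [X.psi_add]; ring
  have hnat : ∀ s ∈ X.Per, ∀ n : ℕ, ∀ r, Λ (n * s + r) = n * Λ s + Λ r := by
    intro s hs n r
    induction n with
    | zero => simp
    | succ n ih =>
      have : ((n + 1 : ℕ) : ℝ) * s + r = s + (n * s + r) := by push_cast; ring
      rw [this, hadd s hs, ih]; push_cast; ring
  have h0 : Λ 0 = 0 := by
    have := hadd 0 X.Per.zero_mem 0
    simp at this; exact this
  have hneg : ∀ s ∈ X.Per, Λ (-s) = - Λ s := by
    intro s hs
    have := hadd s hs (-s)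
    rw [add_neg_cancel, h0] at this; linarith
  have hprop : ∀ s ∈ X.Per, ∀ r ∈ X.Per, 0 < s → 0 < r → Λ s * r = Λ r * s := by
    intro s hs r hr s0 r0
    have key : ∀ n : ℕ, n * |Λ s * r - Λ r * s| ≤ 2 * C * r ^ 2 := by
      intro n
      set m := ⌊n * s / r⌋₊ with hm
      have hm1 : (m : ℝ) * r ≤ n * s := by
        have := Nat.floor_le (show 0 ≤ n * s / r by positivity)
        rwa [le_div_iff₀ r0] at this
      have hm2 : n * s < (m + 1 : ℝ) * r := by
        have := Nat.lt_floor_add_one (n * s / r)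
        rwa [div_lt_iff₀ r0] at this
      set δ := n * s - m * r with hδ
      have e1 : n * Λ s = m * Λ r + Λ δ := by
        have a := hnat s hs n 0
        have b := hnat r hr m δ
        rw [h0] at a
        have : (m : ℝ) * r + δ = n * s + 0 := by rw [hδ]; ring
        rw [this, a] at b; linarith
      have e2 : n * (Λ s * r - Λ r * s) = r * Λ δ - δ * Λ r := by
        have : n * (Λ s * r - Λ r * s) = (n * Λ s) * r - Λ r * (n * s) := by ring
        rw [this, e1, show n * s = m * r + δ by rw [hδ]; ring]; ring
      have d0 : 0 ≤ δ := by rw [hδ]; linarith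
      have d1 : δ ≤ r := by rw [hδ]; linarith
      have b1 : |Λ δ| ≤ C * r := by
        refine (abs_le.2 (hΛC δ)).trans ?_
        rw [abs_of_nonneg d0]; nlinarith
      have b2 : |Λ r| ≤ C * r := by
        have := abs_le.2 (hΛC r)
        rwa [abs_of_pos r0] at this
      calc n * |Λ s * r - Λ r * s| = |r * Λ δ - δ * Λ r| := by
            rw [← e2, abs_mul, Nat.abs_cast]
        _ ≤ |r * Λ δ| + |δ * Λ r| := abs_sub _ _
        _ = r * |Λ δ| + δ * |Λ r| := by rw [abs_mul, abs_mul, abs_of_pos r0, abs_of_nonneg d0]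
        _ ≤ r * (C * r) + r * (C * r) := by
            gcongr
        _ = _ := by ring
    by_contra hne
    have hp : 0 < |Λ s * r - Λ r * s| := abs_pos.2 (sub_ne_zero.2 hne)
    obtain ⟨n, hn⟩ := exists_nat_gt (2 * C * r ^ 2 / |Λ s * r - Λ r * s|)
    rw [div_lt_iff₀ hp] at hn
    linarith [key n]
  have hsum : ∑' p, X.w p * Λ (X.l p) = 1 / X.ρ := by
    have t1 : Tendsto (fun x => ∑' p, X.w p * X.psi x (X.l p)) ω (𝓝 (∑' p, X.w p * Λ (X.l p))) := by
      refine tendsto_tsum_of_dominated_convergence (bound := fun q => C * (X.w q * X.l q))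
        (X.summ_l.mul_left C) (fun q => (hΛ _).const_mul _) ?_
      refine Filter.Eventually.of_forall fun y q => ?_
      rw [Real.norm_eq_abs, abs_mul, abs_of_pos (X.wpos q)]
      have := hC y (X.l q)
      rw [abs_of_pos (X.lpos q)] at this
      nlinarith [X.wpos q]
    have t2 : Tendsto (fun x => (1 - Real.exp (-X.ρ * x)) / X.ρ) ω (𝓝 ((1 - 0) / X.ρ)) := by
      have hrexp : Tendsto (fun y : ℝ => Real.exp (-X.ρ * y)) atTop (𝓝 0) := by
        refine Real.tendsto_exp_atBot.comp ?_
        exact (tendsto_id.const_mul_atTop_of_neg (by linarith [X.ρpos]))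
      exact ((hrexp.mono_left hω).const_sub 1).div_const _
    rw [sub_zero] at t2
    refine tendsto_nhds_unique t1 (t2.congr' ?_)
    filter_upwards [hω (eventually_ge_atTop 0)] with x hx using (X.psi_identity hx).symm
  have hl : ∀ p, X.l p ∈ X.Per := fun p => X.H_le_Per (X.l_mem p)
  obtain ⟨p0⟩ := X.nonempty
  have hlam : Λ (X.l p0) = X.lam * X.l p0 := by
    have h1 : ∀ p, X.w p * Λ (X.l p) = (Λ (X.l p0) / X.l p0) * (X.w p * X.l p) := by
      intro p
      have := hprop _ (hl p) _ (hl p0) (X.lpos p) (X.lpos p0)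
      have h0 := (X.lpos p0).ne'
      field_simp
      linear_combination (X.w p) * this
    simp only [h1] at hsum
    rw [tsum_mul_left] at hsum
    change _ * X.mean = _ at hsum
    have h0 := (X.lpos p0).ne'
    have h2 := X.mean_pos.ne'
    have h3 := X.ρpos.ne'
    unfold lam
    field_simp at hsum ⊢
    linarith
  have hfin : ∀ s ∈ X.Per, 0 < s → Λ s = X.lam * s := by
    intro s hs s0
    have := hprop s hs _ (hl p0) s0 (X.lpos p0)
    rw [hlam] at this
    have h0 := (X.lpos p0).ne'
    apply mul_right_cancel₀ h0
    linarith
  have : Λ s = X.lam * s := by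
    rcases lt_trichotomy s 0 with h | h | h
    · have := hfin (-s) (X.Per.neg_mem hs) (by linarith)
      rw [hneg s hs] at this; linarith
    · rw [h, h0, mul_zero]
    · exact hfin s hs h
  rw [← this]; exact hΛ s

end Ren

namespace Ren
variable {ι : Type} (X : Ren ι)

lemma psi_upper (x : ℝ) {s : ℝ} (hs : 0 < s) : X.psi x s ≤ s * (Real.exp (X.ρ * s) * X.h x) := by
  have h1 : X.psi x s ≤ ∫ t in (x - s)..x, (Real.exp (X.ρ * s) * X.h x) := by
    apply intervalIntegral.integral_mono_on (by linarith) (X.h_int _ _) (by simp)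
    intro t ht
    refine (X.h_reg ht.2).trans (mul_le_mul_of_nonneg_right (Real.exp_le_exp.2 ?_) (X.h_nonneg x))
    exact mul_le_mul_of_nonneg_left (by linarith [ht.1]) X.ρpos.le
  rw [intervalIntegral.integral_const, sub_sub_cancel, smul_eq_mul] at h1
  exact h1

lemma psi_lower (x : ℝ) {s : ℝ} (hs : 0 < s) :
    s * (Real.exp (-(X.ρ * s)) * X.h (x - s)) ≤ X.psi x s := by
  have h1 : ∫ t in (x - s)..x, (Real.exp (-(X.ρ * s)) * X.h (x - s)) ≤ X.psi x s := by
    apply intervalIntegral.integral_mono_on (by linarith) (by simp) (X.h_int _ _)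
    intro t ht
    have h2 := X.h_reg ht.1
    have h3 : Real.exp (X.ρ * (t - (x - s))) * X.h t ≤ Real.exp (X.ρ * s) * X.h t :=
      mul_le_mul_of_nonneg_right (Real.exp_le_exp.2
        (mul_le_mul_of_nonneg_left (by linarith [ht.2]) X.ρpos.le)) (X.h_nonneg t)
    rw [Real.exp_neg, inv_mul_le_iff₀ (Real.exp_pos _)]
    linarith
  rw [intervalIntegral.integral_const, sub_sub_cancel, smul_eq_mul] at h1
  exact h1

lemma h_lower : ∃ c, 0 < c ∧ ∀ᶠ y in atTop, c ≤ X.h y := by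
  obtain ⟨p⟩ := X.nonempty
  have hl := X.psi_lim (X.H_le_Per (X.l_mem p))
  have hlp := X.lpos p
  have hlam := X.lam_pos
  refine ⟨X.lam / 2 / Real.exp (X.ρ * X.l p), by positivity, ?_⟩
  have : X.lam / 2 * X.l p < X.lam * X.l p := by nlinarith
  filter_upwards [hl.eventually_const_lt this] with y hy
  have := X.psi_upper y hlp
  rw [div_le_iff₀ (Real.exp_pos _)]
  have h2 : X.l p * (X.lam / 2) ≤ X.l p * (X.h y * Real.exp (X.ρ * X.l p)) := by linarith
  exact le_of_mul_le_mul_left h2 hlp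

open Topology in
lemma h_lim_dense (hd : Dense (X.H : Set ℝ)) : Tendsto X.h atTop (𝓝 X.lam) := by
  have small : ∀ σ > 0, ∃ s ∈ X.H, 0 < s ∧ s < σ := by
    intro σ hσ
    obtain ⟨s, hs, h1, h2⟩ := hd.exists_between hσ
    exact ⟨s, hs, h1, h2⟩
  rw [tendsto_order]
  constructor
  · intro a ha
    have hc : Tendsto (fun s => a * Real.exp (X.ρ * s)) (𝓝 0) (𝓝 (a * Real.exp (X.ρ * 0))) :=
      Continuous.tendsto (by fun_prop) 0
    rw [mul_zero, Real.exp_zero, mul_one] at hc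
    obtain ⟨σ, hσ, hσ'⟩ := Metric.eventually_nhds_iff.1 (hc.eventually_lt_const ha)
    obtain ⟨s, hs, s0, s1⟩ := small σ hσ
    have h1 := hσ' (y := s) (by rw [Real.dist_eq, sub_zero, abs_of_pos s0]; exact s1)
    have h2 : a * Real.exp (X.ρ * s) * s < X.lam * s := by nlinarith
    filter_upwards [(X.psi_lim (X.H_le_Per hs)).eventually_const_lt h2] with x hx
    have h3 := hx.trans_le (X.psi_upper x s0)
    have h4 : 0 < s * Real.exp (X.ρ * s) := by positivity
    by_contra h5
    push Not at h5
    nlinarith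
  · intro a ha
    have hc : Tendsto (fun s => a * Real.exp (-(X.ρ * s))) (𝓝 0) (𝓝 (a * Real.exp (-(X.ρ * 0)))) :=
      Continuous.tendsto (by fun_prop) 0
    rw [mul_zero, neg_zero, Real.exp_zero, mul_one] at hc
    obtain ⟨σ, hσ, hσ'⟩ := Metric.eventually_nhds_iff.1 (hc.eventually_const_lt ha)
    obtain ⟨s, hs, s0, s1⟩ := small σ hσ
    have h1 := hσ' (y := s) (by rw [Real.dist_eq, sub_zero, abs_of_pos s0]; exact s1)
    have h2 : X.lam * s < a * Real.exp (-(X.ρ * s)) * s := by nlinarith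
    have hl := (X.psi_lim (X.H_le_Per hs)).comp (tendsto_atTop_add_const_right atTop s tendsto_id)
    filter_upwards [hl.eventually_lt_const h2] with x hx
    have h3 := (X.psi_lower (x + s) s0).trans_lt hx
    rw [add_sub_cancel_right] at h3
    have h4 : 0 < s * Real.exp (-(X.ρ * s)) := by positivity
    by_contra h5
    push Not at h5
    nlinarith

def CauchyOn : Prop := ∀ ε > 0, ∃ K, ∀ y y', K ≤ y → K ≤ y' → y - y' ∈ X.H → |X.h y - X.h y'| ≤ ε

open Topology in
lemma cauchy_lattice {q : ℝ} (hq : 0 < q) (hH : X.H = AddSubgroup.zmultiples q) : X.CauchyOn := by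
  set N : ℝ → ℝ := fun y => q * ⌊y / q⌋ with hN
  have hNint : ∀ y, ∀ k : ℤ, N (y - k * q) = N y - k * q := by
    intro y k
    simp only [hN]
    have : (y - k * q) / q = y / q - k := by field_simp
    rw [this, Int.floor_sub_intCast]; push_cast; ring
  have hNH : ∀ y, ∀ s ∈ X.H, N (y - s) = N y - s := by
    intro y s hs
    rw [hH, AddSubgroup.mem_zmultiples_iff] at hs
    obtain ⟨k, rfl⟩ := hs
    simpa using hNint y k
  have hN1 : ∀ y, N y ≤ y := by
    intro y
    have := Int.floor_le (y / q)
    rw [le_div_iff₀ hq] at this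
    simp only [hN]; linarith
  have hN2 : ∀ y, y < N y + q := by
    intro y
    have := Int.lt_floor_add_one (y / q)
    rw [div_lt_iff₀ hq] at this
    simp only [hN]; linarith
  have hN0 : ∀ y, 0 ≤ y → 0 ≤ N y := by
    intro y hy
    have : 0 ≤ ⌊y / q⌋ := Int.floor_nonneg.2 (by positivity)
    have : (0 : ℝ) ≤ ⌊y / q⌋ := by exact_mod_cast this
    simp only [hN]; positivity
  have hNq : ∀ y, N (N y) = N y := by
    intro y
    simp only [hN]
    rw [mul_div_cancel_left₀ _ hq.ne', Int.floor_intCast]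
  have upper : ∀ y, X.h y ≤ Real.exp (-X.ρ * (y - N y)) * X.h (N y) := by
    intro y
    have := X.comp Set.univ (fun _ _ _ => trivial)
      (fun y => X.h y - Real.exp (-X.ρ * (y - N y)) * X.h (N y))
      (fun y _ hy => by
        simp only [X.hneg y hy, X.hneg (N y) ((hN1 y).trans_lt hy)]; simp)
      (fun y _ hy => by
        have e : X.F (fun y => X.h y - Real.exp (-X.ρ * (y - N y)) * X.h (N y)) y
            = X.F X.h y - Real.exp (-X.ρ * (y - N y)) * X.F X.h (N y) := by
          unfold Walk.F
          rw [← tsum_mul_left, ← (X.summ X.h_LB y).tsum_sub ((X.summ X.h_LB (N y)).mul_left _)]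
          refine tsum_congr fun p => ?_
          simp only
          rw [hNH y _ (X.l_mem p), sub_sub_sub_cancel_right]
          ring
        rw [e]
        have h1 := X.ren y hy
        have h2 := X.ren (N y) (hN0 y hy)
        have h3 : Real.exp (-X.ρ * y) = Real.exp (-X.ρ * (y - N y)) * Real.exp (-X.ρ * N y) := by
          rw [← Real.exp_add]; congr 1; ring
        rw [h1, h2, h3]
        apply le_of_eq; ring) y trivial
    linarith
  have exact : ∀ y, X.h y = Real.exp (-X.ρ * (y - N y)) * X.h (N y) := by
    intro y
    refine le_antisymm (upper y) ?_
    have := X.h_reg (hN1 y)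
    rw [neg_mul, Real.exp_neg, inv_mul_le_iff₀ (Real.exp_pos _)]
    exact this
  set β := ∫ r in (0:ℝ)..q, Real.exp (-X.ρ * r) with hβ
  have hβ0 : 0 < β := by
    apply intervalIntegral.intervalIntegral_pos_of_pos
    · apply Continuous.intervalIntegrable; fun_prop
    · intro x; exact Real.exp_pos _
    · exact hq
  have hpsi : ∀ y, X.psi (N y + q) q = β * X.h (N y) := by
    intro y
    unfold psi
    have h1 : ∫ t in (N y + q - q)..(N y + q), X.h t = ∫ r in (0:ℝ)..q, X.h (r + N y) := by
      rw [intervalIntegral.integral_comp_add_right]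
      congr 1 <;> ring
    rw [h1, hβ, ← intervalIntegral.integral_mul_const]
    apply intervalIntegral.integral_congr_ae
    have h0 : ∀ᵐ t : ℝ, t ≠ q := by
      simp [MeasureTheory.ae_iff]
    filter_upwards [h0] with r hr hm
    rw [Set.uIoc_of_le hq.le] at hm
    have hrq : r < q := lt_of_le_of_ne hm.2 hr
    have hNr : N (r + N y) = N y := by
      have hk : N (r + N y) = N r + N y := by
        have := hNint r (-⌊y / q⌋)
        have e : r - ((-⌊y / q⌋ : ℤ) : ℝ) * q = r + N y := by simp only [hN]; push_cast; ring
        rw [e] at this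
        rw [this]; simp only [hN]; push_cast; ring
      have : N r = 0 := by
        have : ⌊r / q⌋ = 0 := by
          rw [Int.floor_eq_zero_iff]
          exact ⟨by have := hm.1; positivity, by rwa [div_lt_one hq]⟩
        simp only [hN, this]; simp
      rw [hk, this, zero_add]
    rw [exact (r + N y), hNr, add_sub_cancel_right]
  have hNtop : Tendsto (fun y => N y + q) atTop atTop :=
    tendsto_atTop_mono (fun y => (hN2 y).le) tendsto_id
  have hqP : q ∈ X.Per := X.H_le_Per (by rw [hH]; exact AddSubgroup.mem_zmultiples q)
  have hlim : Tendsto (fun y => X.h (N y)) atTop (𝓝 (X.lam * q / β)) := by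
    have := ((X.psi_lim hqP).comp hNtop).div_const β
    refine this.congr fun y => ?_
    simp only [Function.comp, hpsi]
    field_simp
  intro ε hε
  rw [Metric.tendsto_atTop] at hlim
  obtain ⟨K, hK⟩ := hlim (ε / 2) (by linarith)
  refine ⟨K, fun y y' hy hy' hyy => ?_⟩
  have e1 : y - N y = y' - N y' := by
    have := hNH y _ hyy
    rw [sub_sub_cancel] at this
    linarith
  rw [exact y, exact y', e1, ← mul_sub, abs_mul, abs_of_pos (Real.exp_pos _)]
  have h1 := hK y hy
  have h2 := hK y' hy'
  rw [Real.dist_eq] at h1 h2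
  have h3 : |X.h (N y) - X.h (N y')| ≤ ε := by
    rw [abs_lt] at h1 h2
    rw [abs_le]; constructor <;> linarith
  have h4 : Real.exp (-X.ρ * (y' - N y')) ≤ 1 := by
    rw [Real.exp_le_one_iff]
    nlinarith [X.ρpos, hN1 y']
  calc _ ≤ 1 * |X.h (N y) - X.h (N y')| := mul_le_mul_of_nonneg_right h4 (abs_nonneg _)
    _ ≤ ε := by linarith

lemma cauchy : X.CauchyOn := by
  rcases AddSubgroup.dense_or_cyclic X.H with hd | ⟨a, ha⟩
  · intro ε hε
    have hl := X.h_lim_dense hd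
    rw [Metric.tendsto_atTop] at hl
    obtain ⟨K, hK⟩ := hl (ε / 2) (by linarith)
    refine ⟨K, fun y y' hy hy' _ => ?_⟩
    have h1 := hK y hy
    have h2 := hK y' hy'
    rw [Real.dist_eq, abs_lt] at h1 h2
    rw [abs_le]; constructor <;> linarith
  · rw [← AddSubgroup.zmultiples_eq_closure] at ha
    rcases lt_trichotomy a 0 with h | h | h
    · exact X.cauchy_lattice (q := -a) (by linarith) (by rw [ha, AddSubgroup.zmultiples_neg])
    · exfalso
      obtain ⟨p⟩ := X.nonempty
      have := X.l_mem p
      rw [ha, h, AddSubgroup.zmultiples_zero_eq_bot, AddSubgroup.mem_bot] at this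
      exact (X.lpos p).ne' this
    · exact X.cauchy_lattice h ha

end Ren

namespace Walk
variable {ι : Type} (X : Walk ι)

def M : ℝ := ∑' p, X.w p * Real.exp (X.η * X.l p)

lemma M_nonneg : 0 ≤ X.M := tsum_nonneg fun p => mul_nonneg (X.wpos p).le (Real.exp_pos _).le

/-- tail estimate -/
lemma tail {g : ι → ℝ} {A t : ℝ} (hA : 0 ≤ A) (hg : ∀ p, |g p| ≤ A * Real.exp (X.η / 2 * X.l p))
    (hz : ∀ p, X.l p ≤ t → g p = 0) :
    |∑' p, X.w p * g p| ≤ A * X.M * Real.exp (-(X.η / 2) * t) := by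
  have hb : ∀ p, |X.w p * g p| ≤ A * Real.exp (-(X.η / 2) * t) * (X.w p * Real.exp (X.η * X.l p)) := by
    intro p
    rw [abs_mul, abs_of_pos (X.wpos p)]
    have key : |g p| ≤ A * Real.exp (-(X.η / 2) * t) * Real.exp (X.η * X.l p) := by
      rcases le_or_gt (X.l p) t with h | h
      · rw [hz p h, abs_zero]; positivity
      · refine (hg p).trans ?_
        rw [mul_assoc, ← Real.exp_add]
        refine mul_le_mul_of_nonneg_left (Real.exp_le_exp.2 ?_) hA
        nlinarith [X.ηpos]
    calc X.w p * |g p| ≤ X.w p * (A * Real.exp (-(X.η / 2) * t) * Real.exp (X.η * X.l p)) :=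
          mul_le_mul_of_nonneg_left key (X.wpos p).le
      _ = _ := by ring
  have hs := X.hexp.mul_left (A * Real.exp (-(X.η / 2) * t))
  have := tsum_of_norm_bounded (f := fun p => X.w p * g p) hs.hasSum hb
  rw [tsum_mul_left] at this
  rw [Real.norm_eq_abs] at this
  refine this.trans (le_of_eq ?_)
  unfold M; ring

/-- variance/covariance estimate -/
lemma cov_le {ξ g : ι → ℝ} {C lam : ℝ} (hlam : 0 < lam) (hξ0 : HasSum (fun p => X.w p * ξ p) 0)
    (hξ2 : Summable fun p => X.w p * ξ p ^ 2) (hg : ∀ p, |g p| ≤ C) :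
    ∑' p, X.w p * (ξ p * g p) ≤ lam / 2 * ((∑' p, X.w p * g p ^ 2) - (∑' p, X.w p * g p) ^ 2)
      + (∑' p, X.w p * ξ p ^ 2) / (2 * lam) := by
  have sg : Summable fun p => X.w p * g p := X.summ_bdd hg
  have sg2 : Summable fun p => X.w p * g p ^ 2 := X.summ_bdd (C := C ^ 2) fun p => by
    rw [abs_pow]; exact pow_le_pow_left₀ (abs_nonneg _) (hg p) 2
  set m := ∑' p, X.w p * g p with hm
  have sξg : Summable fun p => X.w p * (ξ p * g p) := by
    have : Summable fun p => C * (X.w p * ξ p ^ 2 + X.w p) :=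
      ((hξ2.add X.wsum.summable)).mul_left C
    refine Summable.of_norm_bounded this fun p => ?_
    rw [Real.norm_eq_abs, abs_mul, abs_mul, abs_of_pos (X.wpos p)]
    have h1 : |ξ p| ≤ ξ p ^ 2 + 1 := by
      rw [← sq_abs]; nlinarith [sq_nonneg (|ξ p| - 1)]
    have h2 : |ξ p| * |g p| ≤ (ξ p ^ 2 + 1) * C :=
      mul_le_mul h1 (hg p) (abs_nonneg _) (by positivity)
    calc X.w p * (|ξ p| * |g p|) ≤ X.w p * ((ξ p ^ 2 + 1) * C) :=
          mul_le_mul_of_nonneg_left h2 (X.wpos p).le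
      _ = _ := by ring
  have hR : HasSum (fun p => lam / 2 * (X.w p * g p ^ 2 - 2 * m * (X.w p * g p) + m ^ 2 * X.w p)
      + (X.w p * ξ p ^ 2) / (2 * lam) + m * (X.w p * ξ p))
      (lam / 2 * ((∑' p, X.w p * g p ^ 2) - 2 * m * m + m ^ 2 * 1)
      + (∑' p, X.w p * ξ p ^ 2) / (2 * lam) + m * 0) :=
    (((((sg2.hasSum.sub (sg.hasSum.mul_left (2 * m))).add (X.wsum.mul_left (m ^ 2))).mul_left
      (lam / 2)).add (hξ2.hasSum.div_const (2 * lam))).add (hξ0.mul_left m))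
  have := hasSum_le (fun p => ?_) sξg.hasSum hR
  · refine this.trans (le_of_eq ?_); ring
  · have hw := X.wpos p
    have e : lam / 2 * (X.w p * g p ^ 2 - 2 * m * (X.w p * g p) + m ^ 2 * X.w p)
      + (X.w p * ξ p ^ 2) / (2 * lam) + m * (X.w p * ξ p) - X.w p * (ξ p * g p)
      = X.w p / (2 * lam) * (lam * (g p - m) - ξ p) ^ 2 := by
      field_simp; ring
    have : 0 ≤ X.w p / (2 * lam) * (lam * (g p - m) - ξ p) ^ 2 := by positivity
    linarith

end Walk

namespace Ren
variable {ι : Type} (X : Ren ι)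

set_option maxHeartbeats 4000000 in
lemma main_bound (hηρ : X.η / 2 ≤ X.ρ) (ξ : ι → ℝ) (A : ℝ) (hA : 0 ≤ A)
    (hξ : ∀ p, |ξ p| ≤ A * Real.exp (X.η / 2 * X.l p))
    (hξ0 : HasSum (fun p => X.w p * ξ p) 0)
    (Φ r : ℝ → ℝ) (R : ℝ) (hR : 0 ≤ R) (hΦ : LB Φ) (hΦneg : ∀ y < 0, Φ y = 0)
    (hr : ∀ y, 0 ≤ y → r y ≤ R * Real.exp (-(X.η / 2) * y))
    (heq : ∀ y, 0 ≤ y → Φ y = X.F Φ y + ∑' p, X.w p * (ξ p * X.h (y - X.l p)) + r y) :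
    ∀ ε > 0, ∃ K B, ∀ L, K ≤ L → Φ L ≤ ε * √(L + X.b) + B := by
  intro ε hε
  obtain ⟨C, hC0, hC⟩ := X.exists_bdd
  set θ := X.η / 2 with hθdef
  have hθ : 0 < θ := by have := X.ηpos; positivity
  have hγ := X.gap_pos hθ
  set γ := 1 - Real.exp (-θ * X.b) with hγdef
  have hM := X.M_nonneg
  have hb := X.bpos
  have hξ2 : Summable fun p => X.w p * ξ p ^ 2 := by
    refine X.summ_exp_bdd (C := A ^ 2) fun p => ?_
    rw [abs_pow]
    refine (pow_le_pow_left₀ (abs_nonneg _) (hξ p) 2).trans (le_of_eq ?_)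
    rw [mul_pow, ← Real.exp_nat_mul]
    congr 2; rw [hθdef]; push_cast; ring
  set V := ∑' p, X.w p * ξ p ^ 2 with hV
  have hV0 : 0 ≤ V := tsum_nonneg fun p => mul_nonneg (X.wpos p).le (sq_nonneg _)
  have sξb : ∀ (g : ι → ℝ) (D : ℝ), (∀ p, |g p| ≤ D) → Summable fun p => X.w p * (ξ p * g p) := by
    intro g D hg
    refine X.summ_exp_bdd (C := A * D) fun p => ?_
    rw [abs_mul]
    have h1 := hξ p
    have h2 : Real.exp (θ * X.l p) ≤ Real.exp (X.η * X.l p) := by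
      apply Real.exp_le_exp.2; rw [hθdef]; nlinarith [X.ηpos, X.lpos p]
    have hD : 0 ≤ D := (abs_nonneg _).trans (hg p)
    calc |ξ p| * |g p| ≤ (A * Real.exp (X.η * X.l p)) * D := by
          refine mul_le_mul (h1.trans (mul_le_mul_of_nonneg_left h2 hA)) (hg p) (abs_nonneg _) (by positivity)
      _ = _ := by ring
  set C1 := 1 + C * X.M with hC1
  have hC1pos : 0 < C1 := by positivity
  set D := 2 * C1 / γ + V / (2 * X.b) with hD
  have hDpos : 0 < D := by positivity
  set e0 := (ε / D) ^ 2 with he0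
  have he0pos : 0 < e0 := by positivity
  obtain ⟨K0, hK0⟩ := X.cauchy e0 he0pos
  set K := max K0 0 with hK
  have hKnn : 0 ≤ K := le_max_right _ _
  have hKK : K0 ≤ K := le_max_left _ _
  set C3 := (C * A * X.M * Real.exp (θ * K) + R) / γ with hC3
  have hC3pos : 0 ≤ C3 := by positivity
  refine ⟨K, 2 * C3, fun L hL => ?_⟩
  set c := X.h L with hc
  have hcC : ∀ y, |X.h y - c| ≤ C := fun y => by
    rw [abs_le]
    constructor <;> linarith [hC y, hC L, X.h_nonneg y, X.h_nonneg L]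
  set T : Set ℝ := {y | y - L ∈ X.H} with hT
  have hTl : ∀ y ∈ T, ∀ p, y - X.l p ∈ T := by
    intro y hy p
    have : y - X.l p - L = (y - L) - X.l p := by ring
    show y - X.l p - L ∈ X.H
    rw [this]
    exact X.H.sub_mem hy (X.l_mem p)
  clear_value γ V C1 D e0 K C3
  set ht : ℝ → ℝ := fun y => if K ≤ y then X.h y - c else 0 with hht
  have htC : ∀ y, |ht y| ≤ C := by
    intro y; simp only [hht]; split_ifs
    · exact hcC y
    · simpa using hC0.le
  have htLB : LB ht := LB.of_bdd htC
  have htT : ∀ y ∈ T, |ht y| ≤ e0 := by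
    intro y hy; simp only [hht]; split_ifs with h
    · exact hK0 y L (hKK.trans h) (hKK.trans hL) hy
    · simpa using he0pos.le
  have ht2LB : LB (fun y => ht y ^ 2) := by simpa [sq] using htLB.mul htLB
  -- remainder function
  have hrem : ∀ y p, |X.h (y - X.l p) - c - ht (y - X.l p)| ≤ C := by
    intro y p; simp only [hht]; split_ifs
    · simpa using hC0.le
    · simpa using hcC _
  have hrem0 : ∀ y p, X.l p ≤ y - K → X.h (y - X.l p) - c - ht (y - X.l p) = 0 := by
    intro y p h; simp only [hht]
    rw [if_pos (by linarith)]; ring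
  have h1exp : ∀ p, 1 ≤ Real.exp (θ * X.l p) := fun p => by
    rw [Real.one_le_exp_iff]; exact (mul_pos hθ (X.lpos p)).le
  -- bound of k tilde
  have hkt : ∀ y, K ≤ y → |ht y - X.F ht y| ≤ C1 * Real.exp (-θ * (y - K)) := by
    intro y hy
    have hy0 : 0 ≤ y := hKnn.trans hy
    have e1 : ht y = Real.exp (-X.ρ * y) + X.F X.h y - c := by
      simp only [hht]; rw [if_pos hy, X.ren y hy0]
    have e2 : X.F (fun z => X.h z - c - ht z) y = X.F X.h y - c - X.F ht y := by
      rw [X.F_sub (X.h_LB.sub (LB.const c)) htLB, X.F_sub X.h_LB (LB.const c), X.F_const]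
    have e3 : ht y - X.F ht y = Real.exp (-X.ρ * y) + X.F (fun z => X.h z - c - ht z) y := by
      rw [e2, e1]; ring
    have e4 := X.tail (g := fun p => X.h (y - X.l p) - c - ht (y - X.l p)) (A := C) (t := y - K) hC0.le
      (fun p => (hrem y p).trans (by nlinarith [h1exp p])) (fun p hp => hrem0 y p hp)
    have e5 : Real.exp (-X.ρ * y) ≤ Real.exp (-θ * (y - K)) := by
      apply Real.exp_le_exp.2; nlinarith
    rw [e3]
    refine (abs_add_le _ _).trans ?_
    rw [abs_of_pos (Real.exp_pos _), hC1, add_mul, one_mul]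
    exact add_le_add e5 e4
  -- energy
  have energy : ∀ y ∈ T, K ≤ y → X.F (fun z => ht z ^ 2) y - (X.F ht y) ^ 2
      ≤ X.F (fun z => ht z ^ 2) y - ht y ^ 2 + 2 * e0 * (C1 * Real.exp (-θ * (y - K))) := by
    intro y hy hyK
    have h1 := hkt y hyK
    have h2 := htT y hy
    set k := ht y - X.F ht y with hk
    have h3 : X.F ht y = ht y - k := by rw [hk]; ring
    rw [h3]
    have h4 : ht y * k ≤ e0 * (C1 * Real.exp (-θ * (y - K))) := by
      calc ht y * k ≤ |ht y * k| := le_abs_self _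
        _ = |ht y| * |k| := abs_mul _ _
        _ ≤ _ := mul_le_mul h2 h1 (abs_nonneg _) he0pos.le
    nlinarith [sq_nonneg k]
  have energy0 : ∀ y, y < K → X.F (fun z => ht z ^ 2) y = 0 ∧ X.F ht y = 0 ∧ ht y = 0 := by
    intro y hy
    have hz : ∀ p, ht (y - X.l p) = 0 := fun p => by
      simp only [hht]; rw [if_neg]; linarith [X.lpos p]
    refine ⟨?_, ?_, ?_⟩
    · unfold Walk.F; simp [hz]
    · unfold Walk.F; simp [hz]
    · simp only [hht]; rw [if_neg]; linarith
  -- choose lambda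
  have hLb : 0 < L + X.b := by linarith
  set lam := √(L + X.b) / (ε / D) with hlamdef
  have hlam : 0 < lam := by positivity
  -- bound of W
  have hW : ∀ y, ∑' p, X.w p * (ξ p * X.h (y - X.l p)) ≤
      lam / 2 * (X.F (fun z => ht z ^ 2) y - (X.F ht y) ^ 2) + V / (2 * lam)
        + C * A * X.M * Real.exp (θ * K) * Real.exp (-θ * y) := by
    intro y
    have s1 := sξb (fun p => ht (y - X.l p)) C (fun p => htC _)
    have s2 := sξb (fun p => X.h (y - X.l p) - c - ht (y - X.l p)) C (hrem y)
    have e1 : ∑' p, X.w p * (ξ p * X.h (y - X.l p)) = (∑' p, X.w p * (ξ p * ht (y - X.l p)))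
        + ∑' p, X.w p * (ξ p * (X.h (y - X.l p) - c - ht (y - X.l p))) := by
      have := (s1.hasSum.add s2.hasSum).add (hξ0.mul_right c)
      rw [zero_mul, add_zero] at this
      rw [← this.tsum_eq]
      exact tsum_congr fun p => by ring
    have e2 := X.cov_le hlam hξ0 hξ2 (g := fun p => ht (y - X.l p)) (fun p => htC _)
    have e3 := X.tail (g := fun p => ξ p * (X.h (y - X.l p) - c - ht (y - X.l p))) (A := C * A)
      (t := y - K) (by positivity)
      (fun p => by
        rw [abs_mul]
        have := mul_le_mul (hξ p) (hrem y p) (abs_nonneg _) (by positivity)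
        linarith)
      (fun p hp => by rw [hrem0 y p hp, mul_zero])
    have e4 : Real.exp (-(X.η / 2) * (y - K)) = Real.exp (θ * K) * Real.exp (-θ * y) := by
      rw [← Real.exp_add]; congr 1; rw [hθdef]; ring
    rw [e4] at e3
    have e5 := (le_abs_self _).trans e3
    rw [e1]
    have e6 : C * A * X.M * (Real.exp (θ * K) * Real.exp (-θ * y)) =
      C * A * X.M * Real.exp (θ * K) * Real.exp (-θ * y) := by ring
    rw [e6] at e5
    rw [← hV] at e2
    exact add_le_add e2 e5
  clear_value lam ht
  set a1 := 2 * e0 * C1 / γ with ha1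
  have ha1pos : 0 < a1 := by positivity
  set a2 := V / (2 * lam * X.b) with ha2
  have ha2pos : 0 ≤ a2 := by positivity
  clear_value a1 a2
  have hG1 : LB (fun y => X.G θ (y - K)) := (X.G_LB hθ).shift K
  have LB1 : LB (fun y => lam / 2 * (a1 * X.G θ (y - K) - ht y ^ 2)) :=
    ((hG1.cmul a1).sub ht2LB).cmul _
  have LB2 : LB (fun y => a2 * X.Lin y) := X.Lin_LB.cmul _
  have LB3 : LB (fun y => C3 * X.G θ y) := (X.G_LB hθ).cmul _
  have fin := X.comp T hTl (fun y => Φ y - ((lam / 2 * (a1 * X.G θ (y - K) - ht y ^ 2)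
      + a2 * X.Lin y) + C3 * X.G θ y))
    (fun y hy hy0 => by
      rw [hΦneg y hy0, (energy0 y (by linarith)).2.2]
      have g1 := X.G_ge hθ (y - K)
      have g2 := X.G_ge hθ y
      have g3 := X.Lin_nonneg y
      have : 0 ≤ (lam / 2 * (a1 * X.G θ (y - K) - 0 ^ 2) + a2 * X.Lin y) + C3 * X.G θ y := by
        have : 0 ≤ X.G θ (y - K) := by linarith
        have : 0 ≤ X.G θ y := by linarith
        rw [zero_pow two_ne_zero, sub_zero]
        positivity
      linarith)
    (fun y hy hy0 => by
      rw [X.F_sub hΦ ((LB1.add LB2).add LB3), X.F_add (LB1.add LB2) LB3, X.F_add LB1 LB2,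
        X.F_cmul (lam / 2), X.F_cmul a2, X.F_cmul C3, X.F_sub (hG1.cmul a1) ht2LB, X.F_cmul a1,
        X.F_shift]
      have q0 := heq y hy0
      have q1 := hW y
      have q2 := hr y hy0
      have q3 := mul_le_mul_of_nonneg_left (X.Lin_super hy0) ha2pos
      have q4 := mul_le_mul_of_nonneg_left (X.G_super' hθ hy0) hC3pos
      rw [← hγdef] at q4
      have q5 : C3 * (Real.exp (-θ * y) * γ) =
          C * A * X.M * Real.exp (θ * K) * Real.exp (-θ * y) + R * Real.exp (-θ * y) := by
        rw [hC3]; field_simp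
      have q6 : a2 * X.b = V / (2 * lam) := by rw [ha2]; field_simp
      have q7 : lam / 2 * (X.F (fun z => ht z ^ 2) y - (X.F ht y) ^ 2) ≤
          lam / 2 * ((a1 * X.G θ (y - K) - ht y ^ 2) -
            (a1 * X.F (X.G θ) (y - K) - X.F (fun z => ht z ^ 2) y)) := by
        refine mul_le_mul_of_nonneg_left ?_ (by positivity)
        rcases lt_or_ge y K with hlt | hge
        · obtain ⟨z1, z2, z3⟩ := energy0 y hlt
          rw [z1, z2, z3]
          have h9 := mul_le_mul_of_nonneg_left (X.G_super hθ (y - K)) ha1pos.le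
          rw [zero_pow two_ne_zero]
          linarith
        · have z1 := energy y hy hge
          have z2 := mul_le_mul_of_nonneg_left (X.G_super' hθ (sub_nonneg.2 hge)) ha1pos.le
          rw [← hγdef] at z2
          have z3 : a1 * (Real.exp (-θ * (y - K)) * γ) = 2 * e0 * (C1 * Real.exp (-θ * (y - K))) := by
            rw [ha1]; field_simp
          rw [mul_add, z3] at z2
          linarith
      rw [mul_sub] at q7
      rw [mul_add, q5] at q4
      rw [mul_add, q6] at q3
      linarith)
    L (by simp [hT])
  have f1 : X.Lin L = L + X.b := max_eq_left (by linarith)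
  have f2 : lam / 2 * (a1 * X.G θ (L - K) - ht L ^ 2) ≤ lam / 2 * (a1 * 2) := by
    refine mul_le_mul_of_nonneg_left ?_ (by positivity)
    have := mul_le_mul_of_nonneg_left (X.G_le θ (L - K)) ha1pos.le
    nlinarith [sq_nonneg (ht L)]
  have f3 := mul_le_mul_of_nonneg_left (X.G_le θ L) hC3pos
  have hsq : √(L + X.b) * √(L + X.b) = L + X.b := Real.mul_self_sqrt hLb.le
  have hsqpos : 0 < √(L + X.b) := Real.sqrt_pos.2 hLb
  have f4 : lam / 2 * (a1 * 2) = (ε / D) * √(L + X.b) * (2 * C1 / γ) := by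
    rw [hlamdef, ha1, he0]; field_simp
  have f5 : a2 * X.Lin L = (ε / D) * √(L + X.b) * (V / (2 * X.b)) := by
    have h7 : (ε / D) * √(L + X.b) * (V / (2 * X.b)) = (ε / D) * (√(L + X.b) * √(L + X.b)) / √(L + X.b) * (V / (2 * X.b)) := by
      field_simp
    rw [h7, hsq, f1, ha2, hlamdef]; field_simp
  have f6 : (ε / D) * √(L + X.b) * (2 * C1 / γ) + (ε / D) * √(L + X.b) * (V / (2 * X.b))
      = ε * √(L + X.b) := by
    rw [← mul_add, ← hD]; field_simp
  simp only [f5] at fin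
  linarith

end Ren

namespace Comb
variable {P : Set ℕ}

abbrev Tup (P : Set ℕ) (m N : ℕ) : Type := {t : Fin m → ℕ // (∀ i, t i ∈ P) ∧ ∏ i, t i ≤ N}

lemma prod_pos (hP : ∀ n ∈ P, 2 ≤ n) {m : ℕ} (t : Fin m → ℕ) (ht : ∀ i, t i ∈ P) : 0 < ∏ i, t i :=
  Finset.prod_pos fun i _ => by have := hP _ (ht i); omega

lemma two_pow_le (hP : ∀ n ∈ P, 2 ≤ n) {m : ℕ} (t : Fin m → ℕ) (ht : ∀ i, t i ∈ P) :
    2 ^ m ≤ ∏ i, t i := by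
  have := Finset.prod_le_prod' (s := Finset.univ) (f := fun _ : Fin m => 2) (g := t)
    (fun i _ => hP _ (ht i))
  simpa using this

lemma le_prod (hP : ∀ n ∈ P, 2 ≤ n) {m : ℕ} (t : Fin m → ℕ) (ht : ∀ i, t i ∈ P) (i : Fin m) :
    t i ≤ ∏ i, t i :=
  Nat.le_of_dvd (prod_pos hP t ht) (Finset.dvd_prod_of_mem t (Finset.mem_univ i))

lemma tup_finite (hP : ∀ n ∈ P, 2 ≤ n) (m N : ℕ) : Finite (Tup P m N) := by
  have : Set.Finite {t : Fin m → ℕ | (∀ i, t i ∈ P) ∧ ∏ i, t i ≤ N} := by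
    refine Set.Finite.subset (Set.Finite.pi' (fun _ : Fin m => Set.finite_Iic N)) ?_
    rintro t ⟨h1, h2⟩ i
    exact (le_prod hP t h1 i).trans h2
  exact this.to_subtype

lemma tupe_finite (hP : ∀ n ∈ P, 2 ≤ n) (m n : ℕ) :
    Finite {t : Fin m → ℕ // (∀ i, t i ∈ P) ∧ ∏ i, t i = n} := by
  have := tup_finite hP m n
  exact Finite.of_injective (β := Tup P m n) (fun t => ⟨t.1, t.2.1, t.2.2.le⟩)
    (fun a b h => by simpa [Subtype.ext_iff] using h)

def Cm (P : Set ℕ) (m N : ℕ) : ℕ := ∑ n ∈ Finset.Icc 1 N, af P m n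

lemma Cm_eq (hP : ∀ n ∈ P, 2 ≤ n) (m N : ℕ) : Cm P m N = Nat.card (Tup P m N) := by
  have fi := fun n : Finset.Icc 1 N => tupe_finite hP m n
  have e : Tup P m N ≃ Σ n : Finset.Icc 1 N, {t : Fin m → ℕ // (∀ i, t i ∈ P) ∧ ∏ i, t i = n} :=
    { toFun := fun t => ⟨⟨∏ i, t.1 i, Finset.mem_Icc.2 ⟨prod_pos hP t.1 t.2.1, t.2.2⟩⟩, ⟨t.1, t.2.1, rfl⟩⟩
      invFun := fun s => ⟨s.2.1, s.2.2.1, by rw [s.2.2.2]; exact (Finset.mem_Icc.1 s.1.2).2⟩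
      left_inv := fun t => rfl
      right_inv := by
        rintro ⟨⟨n, hn⟩, ⟨t, h1, h2⟩⟩
        simp only at h2
        subst h2
        rfl }
  rw [Nat.card_congr e, Nat.card_sigma]
  unfold Cm af
  exact (Finset.sum_coe_sort (Finset.Icc 1 N)
    (fun n => Nat.card {t : Fin m → ℕ // (∀ i, t i ∈ P) ∧ ∏ i, t i = n})).symm

open Classical in
lemma Cm_succ (hP : ∀ n ∈ P, 2 ≤ n) (m N : ℕ) :
    Cm P (m + 1) N = ∑ p ∈ (Finset.Icc 1 N).filter (· ∈ P), Cm P m (N / p) := by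
  rw [Cm_eq hP]
  have fi := fun p : (Finset.Icc 1 N).filter (· ∈ P) => tup_finite hP m (N / p)
  have e : Tup P (m + 1) N ≃ Σ p : (Finset.Icc 1 N).filter (· ∈ P), Tup P m (N / p) :=
    { toFun := fun t => ⟨⟨t.1 0, by
          have := le_prod hP t.1 t.2.1 0
          have h2 := hP _ (t.2.1 0)
          simp only [Finset.mem_filter, Finset.mem_Icc]
          exact ⟨⟨by omega, this.trans t.2.2⟩, t.2.1 0⟩⟩,
        ⟨fun i => t.1 i.succ, fun i => t.2.1 _, by
          have h2 := hP _ (t.2.1 0)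
          have h3 := t.2.2
          rw [Fin.prod_univ_succ] at h3
          rw [Nat.le_div_iff_mul_le (by simp only; omega), mul_comm]
          exact h3⟩⟩
      invFun := fun s => ⟨Fin.cons s.1.1 s.2.1, by
          have h1 := s.1.2
          simp only [Finset.mem_filter, Finset.mem_Icc] at h1
          refine ⟨fun i => ?_, ?_⟩
          · refine Fin.cases ?_ (fun j => ?_) i
            · simpa using h1.2
            · simpa using s.2.2.1 j
          · rw [Fin.prod_univ_succ]
            simp only [Fin.cons_zero, Fin.cons_succ]
            have h3 := s.2.2.2
            rw [Nat.le_div_iff_mul_le (by omega), mul_comm] at h3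
            exact h3⟩
      left_inv := fun t => by
        apply Subtype.ext
        simp only
        exact Fin.cons_self_tail t.1
      right_inv := by
        rintro ⟨⟨p, hp⟩, ⟨t, h1, h2⟩⟩
        rfl }
  rw [Nat.card_congr e, Nat.card_sigma]
  rw [← Finset.sum_coe_sort ((Finset.Icc 1 N).filter (· ∈ P)) (fun p => Cm P m (N / p))]
  exact Finset.sum_congr rfl fun p _ => (Cm_eq hP _ _).symm

lemma af_zero (hP : ∀ n ∈ P, 2 ≤ n) {m n : ℕ} (h : n < m) : af P m n = 0 := by
  unfold af
  rw [Nat.card_eq_zero]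
  left
  constructor
  rintro ⟨t, h1, h2⟩
  have := two_pow_le hP t h1
  have := Nat.lt_two_pow_self (n := m)
  omega

lemma Cm_zero {N : ℕ} (hN : 1 ≤ N) : Cm P 0 N = 1 := by
  unfold Cm
  rw [Finset.sum_eq_single 1]
  · unfold af
    simp
  · intro b _ hb
    unfold af
    rw [Nat.card_eq_zero]; left; constructor
    rintro ⟨t, h1, h2⟩
    simp at h2; omega
  · intro h; simp at h; omega

def Bcum (P : Set ℕ) (N : ℕ) : ℝ := ∑ n ∈ Finset.Icc 1 N, ∑' m : ℕ, (m : ℝ) * (af P m n : ℝ)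

lemma gen_eq (hP : ∀ n ∈ P, 2 ≤ n) (g : ℕ → ℝ) {N M : ℕ} (h : N < M) :
    ∑ n ∈ Finset.Icc 1 N, ∑' m : ℕ, g m * (af P m n : ℝ) = ∑ m ∈ Finset.range M, g m * (Cm P m N : ℝ) := by
  have : ∀ n ∈ Finset.Icc 1 N, ∑' m : ℕ, g m * (af P m n : ℝ)
      = ∑ m ∈ Finset.range M, g m * (af P m n : ℝ) := by
    intro n hn
    rw [Finset.mem_Icc] at hn
    refine tsum_eq_sum fun m hm => ?_
    rw [Finset.mem_range] at hm
    rw [af_zero hP (by omega)]; simp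
  rw [Finset.sum_congr rfl this, Finset.sum_comm]
  refine Finset.sum_congr rfl fun m _ => ?_
  unfold Cm
  push_cast
  rw [Finset.mul_sum]

lemma A_eq (hP : ∀ n ∈ P, 2 ≤ n) {N M : ℕ} (h : N < M) :
    Acum P N = ∑ m ∈ Finset.range M, (Cm P m N : ℝ) := by
  have := gen_eq hP (fun _ => 1) h
  simpa [Acum, aTot] using this

lemma B_eq (hP : ∀ n ∈ P, 2 ≤ n) {N M : ℕ} (h : N < M) :
    Bcum P N = ∑ m ∈ Finset.range M, (m : ℝ) * (Cm P m N : ℝ) :=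
  gen_eq hP (fun m => (m : ℝ)) h

lemma sum_to_tsum (f : ℕ → ℝ) (hf : f 0 = 0) {N : ℕ} :
    letI := Classical.decPred (· ∈ P)
    ∑ p ∈ (Finset.Icc 1 N).filter (· ∈ P), f (N / p) = ∑' p : P, f (N / (p : ℕ)) := by
  classical
  rw [tsum_subtype P (fun p => f (N / p))]
  rw [tsum_eq_sum (s := Finset.Icc 1 N), Finset.sum_filter]
  · exact Finset.sum_congr (by rfl) fun p _ => by simp [Set.indicator_apply]
  · intro p hp
    rw [Finset.mem_Icc] at hp
    rw [Set.indicator_apply]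
    have : N / p = 0 := by
      rw [Nat.div_eq_zero_iff]; omega
    rw [this, hf]; simp

lemma A_zero : Acum P 0 = 0 := by simp [Acum]
lemma B_zero : Bcum P 0 = 0 := by simp [Bcum]

lemma A_rec (hP : ∀ n ∈ P, 2 ≤ n) {N : ℕ} (hN : 1 ≤ N) :
    Acum P N = 1 + ∑' p : P, Acum P (N / (p : ℕ)) := by
  classical
  rw [A_eq hP (M := N + 1 + 1) (by omega), Finset.sum_range_succ', Cm_zero hN]
  simp only [Cm_succ hP]
  push_cast
  rw [Finset.sum_comm, add_comm, ← sum_to_tsum (Acum P) A_zero]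
  congr 1
  refine Finset.sum_congr (by congr) fun p _ => ?_
  rw [A_eq hP (M := N + 1)]
  exact Nat.lt_succ_of_le (Nat.div_le_self _ _)

lemma B_rec (hP : ∀ n ∈ P, 2 ≤ n) (N : ℕ) :
    Bcum P N = ∑' p : P, (Acum P (N / (p : ℕ)) + Bcum P (N / (p : ℕ))) := by
  classical
  rw [B_eq hP (M := N + 1 + 1) (by omega), Finset.sum_range_succ']
  simp only [Cm_succ hP]
  push_cast
  rw [zero_mul, add_zero]
  simp only [Finset.mul_sum]
  rw [Finset.sum_comm, ← sum_to_tsum (fun n => Acum P n + Bcum P n) (by simp [A_zero, B_zero])]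
  refine Finset.sum_congr (by congr) fun p _ => ?_
  have hlt : N / p < N + 1 := Nat.lt_succ_of_le (Nat.div_le_self _ _)
  rw [A_eq hP hlt, B_eq hP hlt, ← Finset.sum_add_distrib]
  exact Finset.sum_congr rfl fun m _ => by ring

lemma A_mono : Monotone (Acum P) := by
  intro a b h
  unfold Acum
  refine Finset.sum_le_sum_of_subset_of_nonneg (Finset.Icc_subset_Icc le_rfl h) fun n _ _ => ?_
  exact tsum_nonneg fun m => by positivity

lemma B_mono : Monotone (Bcum P) := by
  intro a b h
  unfold Bcum
  refine Finset.sum_le_sum_of_subset_of_nonneg (Finset.Icc_subset_Icc le_rfl h) fun n _ _ => ?_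
  exact tsum_nonneg fun m => by positivity

lemma A_nonneg (N : ℕ) : 0 ≤ Acum P N := by
  rw [← A_zero (P := P)]; exact A_mono (Nat.zero_le _)

lemma B_nonneg (N : ℕ) : 0 ≤ Bcum P N := by
  rw [← B_zero (P := P)]; exact B_mono (Nat.zero_le _)

end Comb

namespace Ren
variable {ι : Type} (X : Ren ι)

lemma yh_LB : LB (fun y => y * X.h y) := by
  obtain ⟨C, hC0, hC⟩ := X.exists_bdd
  intro y
  refine ⟨|y| * C, fun z hz => ?_⟩
  show |z * X.h z| ≤ |y| * C
  rcases lt_or_ge z 0 with h | h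
  · rw [X.hneg z h]; simp; positivity
  · rw [abs_mul, abs_of_nonneg h, abs_of_nonneg (X.h_nonneg z)]
    exact mul_le_mul (hz.trans (le_abs_self y)) (hC z) (X.h_nonneg z) (abs_nonneg _)

lemma mean_asymp (hηρ : X.η / 2 < X.ρ) (bf : ℝ → ℝ) (hbneg : ∀ y < 0, bf y = 0) (hbLB : LB bf)
    (hb : ∀ y, 0 ≤ y → bf y = X.F (fun z => X.h z + bf z) y) :
    (fun y => bf y / X.h y - 1 / X.mean * y) =o[atTop] fun y => √y := by
  have hθ : 0 < X.η / 2 := by have := X.ηpos; positivity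
  have hm := X.mean_pos
  set μ := 1 / X.mean with hμ
  have hμ0 : 0 < μ := by positivity
  set Φ : ℝ → ℝ := fun y => bf y - μ * (y * X.h y) with hΦdef
  have hΦLB : LB Φ := hbLB.sub (X.yh_LB.cmul μ)
  have hΦneg : ∀ y < 0, Φ y = 0 := fun y hy => by
    simp only [hΦdef]; rw [hbneg y hy, X.hneg y hy]; ring
  set ξ : ι → ℝ := fun p => 1 - μ * X.l p with hξdef
  have hξ0 : HasSum (fun p => X.w p * ξ p) 0 := by
    have := X.wsum.sub ((X.summ_l.hasSum).mul_left μ)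
    have e : (1 : ℝ) - μ * ∑' p, X.w p * X.l p = 0 := by
      have : ∑' p, X.w p * X.l p = X.mean := rfl
      rw [this, hμ]; field_simp; simp
    rw [e] at this
    refine this.congr_fun ?_
    intro p
    simp only [hξdef]; ring
  have hξ : ∀ p, |ξ p| ≤ (1 + μ / (X.η / 2)) * Real.exp (X.η / 2 * X.l p) := by
    intro p
    have h0 := X.lpos p
    have h1 : |ξ p| ≤ 1 + μ * X.l p := by
      rw [abs_le]; constructor <;> simp only [hξdef] <;> nlinarith [mul_pos hμ0 h0]
    have h2 : X.η / 2 * X.l p ≤ Real.exp (X.η / 2 * X.l p) := by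
      linarith [Real.add_one_le_exp (X.η / 2 * X.l p)]
    have h3 : 1 ≤ Real.exp (X.η / 2 * X.l p) := Real.one_le_exp (by positivity)
    have h4 : μ * X.l p = μ / (X.η / 2) * (X.η / 2 * X.l p) := by
      rw [← mul_assoc, div_mul_cancel₀ _ hθ.ne']
    have h5 := mul_le_mul_of_nonneg_left h2 (by positivity : 0 ≤ μ / (X.η / 2))
    rw [add_mul]; linarith
  have hρθ : 0 < X.ρ - X.η / 2 := by linarith
  have hr : ∀ y, 0 ≤ y → |μ * y * Real.exp (-X.ρ * y)| ≤ μ / (X.ρ - X.η / 2) * Real.exp (-(X.η / 2) * y) := by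
    intro y hy
    rw [abs_of_nonneg (by positivity)]
    have h2 : (X.ρ - X.η / 2) * y ≤ Real.exp ((X.ρ - X.η / 2) * y) := by
      linarith [Real.add_one_le_exp ((X.ρ - X.η / 2) * y)]
    have e : Real.exp (-(X.η / 2) * y) = Real.exp ((X.ρ - X.η / 2) * y) * Real.exp (-X.ρ * y) := by
      rw [← Real.exp_add]; congr 1; ring
    rw [e, ← mul_assoc]
    refine mul_le_mul_of_nonneg_right ?_ (Real.exp_pos _).le
    have h5 := mul_le_mul_of_nonneg_left h2 (by positivity : 0 ≤ μ / (X.ρ - X.η / 2))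
    refine le_trans (le_of_eq ?_) h5
    rw [← mul_assoc, div_mul_cancel₀ _ hρθ.ne']
  have hA : 0 ≤ 1 + μ / (X.η / 2) := by positivity
  have hR : 0 ≤ μ / (X.ρ - X.η / 2) := by positivity
  have heq : ∀ y, 0 ≤ y → Φ y = X.F Φ y + ∑' p, X.w p * (ξ p * X.h (y - X.l p))
      + -(μ * y * Real.exp (-X.ρ * y)) := by
    intro y hy
    have e1 : X.F Φ y = X.F bf y - μ * X.F (fun z => z * X.h z) y := by
      rw [X.F_sub hbLB (X.yh_LB.cmul μ), X.F_cmul]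
    have s1 := X.summ X.h_LB y
    have s2 := X.summ X.yh_LB y
    have e2 : ∑' p, X.w p * (ξ p * X.h (y - X.l p))
        = X.F X.h y - μ * (y * X.F X.h y - X.F (fun z => z * X.h z) y) := by
      have := s1.hasSum.sub (((s1.hasSum.mul_left y).sub s2.hasSum).mul_left μ)
      unfold Walk.F
      rw [← this.tsum_eq]
      refine tsum_congr fun p => ?_
      simp only [hξdef]; ring
    have e3 := hb y hy
    rw [X.F_add X.h_LB hbLB] at e3
    have e4 := X.ren y hy
    rw [e1, e2]
    simp only [hΦdef]
    rw [e3]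
    have e5 : μ * (y * X.h y) = μ * (y * (Real.exp (-X.ρ * y) + X.F X.h y)) := by rw [← e4]
    rw [e5]; ring
  have B1 := X.main_bound hηρ.le ξ _ hA hξ hξ0 Φ _ _ hR hΦLB hΦneg
    (fun y hy => by
      have := neg_abs_le (μ * y * Real.exp (-X.ρ * y))
      have := hr y hy
      linarith) heq
  have B2 := X.main_bound hηρ.le (fun p => - ξ p) _ hA (fun p => by rw [abs_neg]; exact hξ p)
    (by simpa using hξ0.neg) (fun y => - Φ y) (fun y => μ * y * Real.exp (-X.ρ * y)) _ hR hΦLB.neg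
    (fun y hy => by rw [hΦneg y hy, neg_zero])
    (fun y hy => (le_abs_self _).trans (hr y hy))
    (fun y hy => by
      rw [X.F_neg, heq y hy]
      have : ∑' p, X.w p * (-ξ p * X.h (y - X.l p)) = - ∑' p, X.w p * (ξ p * X.h (y - X.l p)) := by
        rw [← tsum_neg]; exact tsum_congr fun p => by ring
      rw [this]; ring)
  obtain ⟨c, hc0, hc⟩ := X.h_lower
  rw [isLittleO_iff]
  intro δ hδ
  obtain ⟨K1, C1, hK1⟩ := B1 (c * δ / 3) (by positivity)
  obtain ⟨K2, C2, hK2⟩ := B2 (c * δ / 3) (by positivity)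
  have hsq : ∀ᶠ y : ℝ in atTop, max C1 C2 ≤ c * δ / 3 * √y :=
    (Real.tendsto_sqrt_atTop.const_mul_atTop (by positivity : 0 < c * δ / 3)).eventually_ge_atTop _
  filter_upwards [hc, hsq, eventually_ge_atTop K1, eventually_ge_atTop K2, eventually_ge_atTop X.b]
    with y h1 h2 h3 h4 h5
  have hb0 := X.bpos
  have hy0 : 0 < y := hb0.trans_le h5
  have hh : 0 < X.h y := hc0.trans_le h1
  have e : bf y / X.h y - μ * y = Φ y / X.h y := by
    simp only [hΦdef]; field_simp
  have hs : √(y + X.b) ≤ 2 * √y := by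
    rw [Real.sqrt_le_left (by positivity), mul_pow, Real.sq_sqrt hy0.le]; linarith
  have hs2 := mul_le_mul_of_nonneg_left hs (by positivity : 0 ≤ c * δ / 3)
  have u1 := hK1 y h3
  have u2 := hK2 y h4
  have u3 := le_max_left C1 C2
  have u4 := le_max_right C1 C2
  have hΦ : |Φ y| ≤ δ * √y * c := by
    rw [abs_le]; constructor <;> linarith
  rw [e, Real.norm_eq_abs, Real.norm_eq_abs, abs_div, abs_of_pos hh, abs_of_nonneg (Real.sqrt_nonneg y),
    div_le_iff₀ hh]
  exact hΦ.trans (mul_le_mul_of_nonneg_left h1 (by positivity))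

end Ren

namespace Comb
variable {P : Set ℕ}

lemma exists_r {ρ : ℝ} (h : kappa P < (ρ : EReal)) :
    ∃ r : ℝ, r < ρ ∧ Summable (fun n : P => ((n : ℕ) : ℝ) ^ (-r)) := by
  unfold kappa at h
  rw [sInf_lt_iff] at h
  obtain ⟨x, ⟨r, rfl, hr⟩, hx⟩ := h
  exact ⟨r, by exact_mod_cast hx, hr⟩

lemma floor_shift (hP : ∀ n ∈ P, 2 ≤ n) (y : ℝ) (p : P) :
    ⌊Real.exp (y - Real.log (p : ℕ))⌋₊ = ⌊Real.exp y⌋₊ / (p : ℕ) := by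
  have h2 := hP p p.2
  have : (0 : ℝ) < (p : ℕ) := by exact_mod_cast (by omega : 0 < (p : ℕ))
  rw [Real.exp_sub, Real.exp_log this, Nat.floor_div_natCast]

lemma w_mul (hP : ∀ n ∈ P, 2 ≤ n) (ρ y : ℝ) (p : P) :
    ((p : ℕ) : ℝ) ^ (-ρ) * Real.exp (-ρ * (y - Real.log (p : ℕ))) = Real.exp (-ρ * y) := by
  have h2 := hP p p.2
  have : (0 : ℝ) < (p : ℕ) := by exact_mod_cast (by omega : 0 < (p : ℕ))
  rw [Real.rpow_def_of_pos this, ← Real.exp_add]; congr 1; ring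

lemma floor_neg {y : ℝ} (hy : y < 0) : ⌊Real.exp y⌋₊ = 0 :=
  Nat.floor_eq_zero.2 (by simpa using hy)

def mkRen (hP : ∀ n ∈ P, 2 ≤ n) (ρ η : ℝ) (hρ0 : 0 < ρ) (hη : 0 < η)
    (hs : HasSum (fun n : P => ((n : ℕ) : ℝ) ^ (-ρ)) 1)
    (hexp : Summable (fun n : P => ((n : ℕ) : ℝ) ^ (-ρ) * Real.exp (η * Real.log (n : ℕ)))) : Ren P where
  w p := ((p : ℕ) : ℝ) ^ (-ρ)
  l p := Real.log (p : ℕ)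
  b := Real.log 2
  η := η
  wpos p := by
    have h2 := hP p p.2
    have : (0 : ℝ) < (p : ℕ) := by exact_mod_cast (by omega : 0 < (p : ℕ))
    exact Real.rpow_pos_of_pos this _
  wsum := hs
  bpos := Real.log_pos (by norm_num)
  hb p := Real.log_le_log (by norm_num) (by exact_mod_cast hP p p.2)
  ηpos := hη
  hexp := hexp
  ρ := ρ
  ρpos := hρ0
  h y := Real.exp (-ρ * y) * Acum P ⌊Real.exp y⌋₊
  hneg y hy := by rw [floor_neg hy, A_zero, mul_zero]
  hren y hy := by
    have h1 : 1 ≤ ⌊Real.exp y⌋₊ := (Nat.one_le_floor_iff _).2 (Real.one_le_exp hy)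
    rw [A_rec hP h1, mul_add, mul_one, ← tsum_mul_left]
    congr 1
    refine tsum_congr fun p => ?_
    rw [floor_shift hP, ← mul_assoc, w_mul hP]
  hmono := by
    intro a b hab
    have e : ∀ y : ℝ, Real.exp (ρ * y) * (Real.exp (-ρ * y) * Acum P ⌊Real.exp y⌋₊)
        = Acum P ⌊Real.exp y⌋₊ := fun y => by
      rw [← mul_assoc, ← Real.exp_add]; simp
    simp only [e]
    exact A_mono (Nat.floor_mono (Real.exp_le_exp.2 hab))

lemma bf_LB (ρ : ℝ) (hρ0 : 0 < ρ) : LB (fun y => Real.exp (-ρ * y) * Bcum P ⌊Real.exp y⌋₊) := by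
  intro y
  refine ⟨Bcum P ⌊Real.exp y⌋₊, fun z hz => ?_⟩
  show |Real.exp (-ρ * z) * Bcum P ⌊Real.exp z⌋₊| ≤ Bcum P ⌊Real.exp y⌋₊
  rcases lt_or_ge z 0 with h | h
  · rw [floor_neg h, B_zero]; simpa using B_nonneg _
  · rw [abs_of_nonneg (mul_nonneg (Real.exp_pos _).le (B_nonneg _))]
    have h1 : Real.exp (-ρ * z) ≤ 1 := by rw [Real.exp_le_one_iff]; nlinarith
    have h2 : Bcum P ⌊Real.exp z⌋₊ ≤ Bcum P ⌊Real.exp y⌋₊ :=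
      B_mono (Nat.floor_mono (Real.exp_le_exp.2 hz))
    calc _ ≤ 1 * Bcum P ⌊Real.exp z⌋₊ := mul_le_mul_of_nonneg_right h1 (B_nonneg _)
      _ ≤ _ := by rw [one_mul]; exact h2

end Comb
/-- **The mean of `Y_N`.** `E(Y_N) = μ log N + o(√(log N))` as `N → ∞`;
in particular `E(Y_N) ∼ μ log N`. -/
theorem ordered_factorizations_mean
    (P : Set ℕ) (hP : ∀ n ∈ P, 2 ≤ n) (hP2 : P.Nontrivial)
    (hκ : 1 < PvalE P (kappa P))
    (ρ : ℝ) (hρ0 : 0 < ρ) (hρκ : kappa P < (ρ : EReal)) (hρ1 : Pval P ρ = 1)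
    (μ : ℝ) (hμ : μ = -1 / Pderiv1 P ρ) :
    ((fun N : ℕ =>
        (∑ n ∈ Finset.Icc 1 N, ∑' m : ℕ, (m : ℝ) * (af P m n : ℝ)) / Acum P N
          - μ * Real.log N)
      =o[atTop] fun N : ℕ => Real.sqrt (Real.log N)) ∧
    Asymptotics.IsEquivalent atTop
      (fun N : ℕ =>
        (∑ n ∈ Finset.Icc 1 N, ∑' m : ℕ, (m : ℝ) * (af P m n : ℝ)) / Acum P N)
      (fun N : ℕ => μ * Real.log N) := by
  obtain ⟨r, hrρ, hr⟩ := Comb.exists_r hρκ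
  have hpos : ∀ p : P, (1 : ℝ) < (p : ℕ) := fun p => by
    have := hP p p.2
    exact_mod_cast (by omega : 1 < (p : ℕ))
  have hsum : Summable (fun n : P => ((n : ℕ) : ℝ) ^ (-ρ)) := by
    by_contra h
    unfold Pval at hρ1
    rw [tsum_eq_zero_of_not_summable h] at hρ1
    exact zero_ne_one hρ1
  have hs : HasSum (fun n : P => ((n : ℕ) : ℝ) ^ (-ρ)) 1 := by
    have := hsum.hasSum
    unfold Pval at hρ1
    rwa [hρ1] at this
  have hη : 0 < min (ρ - r) ρ := lt_min (by linarith) hρ0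
  have hexp : Summable (fun n : P => ((n : ℕ) : ℝ) ^ (-ρ) * Real.exp (min (ρ - r) ρ * Real.log (n : ℕ))) := by
    refine Summable.of_nonneg_of_le (fun p => ?_) (fun p => ?_) hr
    · have := hpos p
      positivity
    · have h1 := hpos p
      have h0 : (0 : ℝ) < (p : ℕ) := by linarith
      rw [Real.rpow_def_of_pos h0, Real.rpow_def_of_pos h0, ← Real.exp_add]
      apply Real.exp_le_exp.2
      have h2 := Real.log_pos h1
      have h3 := min_le_left (ρ - r) ρ
      nlinarith
  let X : Ren P := Comb.mkRen hP ρ (min (ρ - r) ρ) hρ0 hη hs hexp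
  have hmean : 1 / X.mean = μ := by
    rw [hμ]
    unfold Pderiv1
    rw [neg_div_neg_eq]
    rfl
  have hμ0 : 0 < μ := by
    rw [← hmean]; have := X.mean_pos; positivity
  have key := X.mean_asymp (by
      show min (ρ - r) ρ / 2 < ρ
      have := min_le_right (ρ - r) ρ
      linarith)
    (fun y => Real.exp (-ρ * y) * Comb.Bcum P ⌊Real.exp y⌋₊)
    (fun y hy => by
      rw [Comb.floor_neg hy, Comb.B_zero, mul_zero])
    (Comb.bf_LB ρ hρ0)
    (fun y hy => by
      show Real.exp (-ρ * y) * Comb.Bcum P ⌊Real.exp y⌋₊ = ∑' p : P, ((p : ℕ) : ℝ) ^ (-ρ) *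
        (Real.exp (-ρ * (y - Real.log (p : ℕ))) * Acum P ⌊Real.exp (y - Real.log (p : ℕ))⌋₊
        + Real.exp (-ρ * (y - Real.log (p : ℕ))) * Comb.Bcum P ⌊Real.exp (y - Real.log (p : ℕ))⌋₊)
      rw [Comb.B_rec hP, ← tsum_mul_left]
      refine tsum_congr fun p => ?_
      rw [Comb.floor_shift hP, ← mul_add, ← mul_assoc, Comb.w_mul hP])
  rw [hmean] at key
  have hlog : Tendsto (fun N : ℕ => Real.log (N : ℝ)) atTop atTop :=
    Real.tendsto_log_atTop.comp tendsto_natCast_atTop_atTop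
  have main : (fun N : ℕ =>
        (∑ n ∈ Finset.Icc 1 N, ∑' m : ℕ, (m : ℝ) * (af P m n : ℝ)) / Acum P N
          - μ * Real.log N)
      =o[atTop] fun N : ℕ => Real.sqrt (Real.log N) := by
    refine (key.comp_tendsto hlog).congr' ?_ (Eventually.of_forall fun N => rfl)
    filter_upwards [eventually_ge_atTop 1] with N hN
    have h0 : (0 : ℝ) < N := by exact_mod_cast hN
    show Real.exp (-ρ * Real.log N) * Comb.Bcum P ⌊Real.exp (Real.log N)⌋₊
      / (Real.exp (-ρ * Real.log N) * Acum P ⌊Real.exp (Real.log N)⌋₊) - μ * Real.log N = _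
    rw [Real.exp_log h0, Nat.floor_natCast, mul_div_mul_left _ _ (Real.exp_pos _).ne']
    rfl
  refine ⟨main, ?_⟩
  have hsl : (fun N : ℕ => Real.sqrt (Real.log N)) =o[atTop] fun N : ℕ => Real.log (N : ℝ) := by
    have : (fun y : ℝ => √y) =o[atTop] fun y : ℝ => y := by
      rw [isLittleO_iff]
      intro δ hδ
      have h1 : ∀ᶠ y : ℝ in atTop, 1 ≤ δ * √y :=
        (Real.tendsto_sqrt_atTop.const_mul_atTop hδ).eventually_ge_atTop _
      filter_upwards [h1, eventually_ge_atTop 0] with y h2 h3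
      rw [Real.norm_eq_abs, Real.norm_eq_abs, abs_of_nonneg h3, abs_of_nonneg (Real.sqrt_nonneg y)]
      have h4 := Real.mul_self_sqrt h3
      nlinarith [mul_le_mul_of_nonneg_right h2 (Real.sqrt_nonneg y)]
    exact this.comp_tendsto hlog
  exact (main.trans hsl).trans_isBigO (isBigO_self_const_mul hμ0.ne' _ _)
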